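/- arXiv:2604.11366 — 3 statements merged into one kernel-verified Lean document; each statement's English description precedes it below -/
import Mathlib

section
/- For every even integer t ≥ 2 and every ε > 0 there exists N such that for all n ≥ N there exists a bipartite graph G on n vertices containing no subgraph isomorphic to B_t with e(G) ≥ ((1/4)·t(t+2)/(t+1)^{3/2} − ε)·n^{3/2}. (That is, ex_bip(n, B_t) ≥ (1/4)·t(t+2)/(t+1)^{3/2}·(1+o(1))·n^{3/2} for even t.) -/
open SimpleGraph

/-- `F` is contained in `G` as a subgraph: there is an injective map preserving adjacency. -/
def ContainsCopy {α β : Type*} (F : SimpleGraph α) (G : SimpleGraph β) : Prop :=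
  ∃ f : α → β, Function.Injective f ∧ ∀ ⦃a b : α⦄, F.Adj a b → G.Adj (f a) (f b)

/-- `Bgraph t = K₂ □ S_t`, the Cartesian product of an edge and a star with `t` edges. -/
def Bgraph (t : ℕ) : SimpleGraph (Fin 2 × (Fin 1 ⊕ Fin t)) :=
  (⊤ : SimpleGraph (Fin 2)).boxProd (completeBipartiteGraph (Fin 1) (Fin t))


namespace PPGap

open MeasureTheory Filter Topology Complex ArithmeticFunction

noncomputable def tri (T τ : ℝ) : ℝ := 1 - |τ| / T
noncomputable def ker (T v : ℝ) : ℝ := T * Real.sinc (T * v / 2) ^ 2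
noncomputable def gAux : ℂ → ℂ := vonMangoldt.LFunctionResidueClassAux (1 : ZMod 1)
noncomputable def Pm (T σ y : ℝ) : ℝ := ∫ u in Set.Ioi (0:ℝ), Real.exp (-(u * (σ - 1))) * ker T (y - u)
noncomputable def Rm (T σ y : ℝ) : ℂ :=
  ∫ τ in -T..T, (tri T τ : ℂ) * cexp (I * τ * y) * gAux (σ + I * τ)

lemma continuous_tri (T : ℝ) : Continuous (tri T) := by unfold tri; fun_prop

lemma continuous_ker (T : ℝ) : Continuous (ker T) := by
  unfold ker
  have := Real.continuous_sinc
  fun_prop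

lemma tri_abs_le {T τ : ℝ} (hT : 0 < T) (h : τ ∈ Set.Icc (-T) T) : |tri T τ| ≤ 1 := by
  have h1 : |τ| ≤ T := abs_le.mpr h
  have h2 : |τ| / T ≤ 1 := (div_le_one hT).mpr h1
  have h3 : 0 ≤ |τ| / T := by positivity
  unfold tri
  rw [abs_le]; constructor <;> linarith

lemma ker_nonneg {T : ℝ} (hT : 0 < T) (v : ℝ) : 0 ≤ ker T v := by unfold ker; positivity

lemma ker_le {T : ℝ} (hT : 0 < T) (v : ℝ) : ker T v ≤ T := by
  unfold ker
  have h := Real.abs_sinc_le_one (T * v / 2)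
  have : Real.sinc (T * v / 2) ^ 2 ≤ 1 := by rw [← sq_abs]; exact pow_le_one₀ (abs_nonneg _) h
  nlinarith

lemma ker_eq {T v : ℝ} (hT : 0 < T) (hv : v ≠ 0) : ker T v = 2 * (1 - Real.cos (T * v)) / (T * v ^ 2) := by
  unfold ker
  rw [Real.sinc_of_ne_zero (by positivity)]
  have h : Real.cos (T * v) = 1 - 2 * Real.sin (T * v / 2) ^ 2 := by
    have := Real.cos_two_mul (T * v / 2)
    have h2 := Real.sin_sq_add_cos_sq (T * v / 2)
    rw [show 2 * (T * v / 2) = T * v by ring] at this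
    linarith
  rw [h]
  field_simp
  ring

lemma ker_le' {T v : ℝ} (hT : 0 < T) (hv : v ≠ 0) : ker T v ≤ 4 / (T * v ^ 2) := by
  rw [ker_eq hT hv]
  gcongr
  linarith [Real.neg_one_le_cos (T * v)]

lemma fejer {T : ℝ} (hT : 0 < T) (v : ℝ) :
    ∫ τ in -T..T, (tri T τ : ℂ) * cexp (I * τ * v) = (ker T v : ℂ) := by
  have hc : Continuous fun τ : ℝ => (tri T τ : ℂ) * cexp (I * τ * v) := by
    have := continuous_tri T
    fun_prop
  rw [← intervalIntegral.integral_add_adjacent_intervals (b := 0)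
    (hc.intervalIntegrable _ _) (hc.intervalIntegrable _ _)]
  have h1 : ∫ τ in -T..0, (tri T τ : ℂ) * cexp (I * τ * v)
      = ∫ τ in (0:ℝ)..T, (tri T (-τ) : ℂ) * cexp (I * ((-τ : ℝ) : ℂ) * v) := by
    rw [intervalIntegral.integral_comp_neg (fun τ : ℝ => (tri T τ : ℂ) * cexp (I * τ * v))]
    simp
  rw [h1, ← intervalIntegral.integral_add]
  rotate_left
  · exact (hc.comp continuous_neg).intervalIntegrable _ _
  · exact hc.intervalIntegrable _ _
  have h2 : ∫ τ in (0:ℝ)..T, ((tri T (-τ) : ℂ) * cexp (I * ((-τ : ℝ) : ℂ) * v)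
        + (tri T τ : ℂ) * cexp (I * τ * v))
      = ∫ τ in (0:ℝ)..T, ((2 * (1 - τ / T) * Real.cos (τ * v) : ℝ) : ℂ) := by
    apply intervalIntegral.integral_congr
    intro τ hτ
    rw [Set.uIcc_of_le hT.le] at hτ
    have : |τ| = τ := abs_of_nonneg hτ.1
    simp only [tri, abs_neg, this]
    push_cast
    have e : 2 * Complex.cos (τ * v) = cexp (I * τ * v) + cexp (I * -τ * v) := by
      rw [Complex.two_cos]; congr 1 <;> congr 1 <;> ring
    rw [mul_right_comm 2, e]; ring
  rw [h2, intervalIntegral.integral_ofReal]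
  congr 1
  by_cases hv : v = 0
  · subst hv
    have := intervalIntegral.integral_eq_sub_of_hasDerivAt (a := 0) (b := T)
      (f := fun τ => 2 * τ - τ ^ 2 / T) (f' := fun τ => 2 * (1 - τ / T) * Real.cos (τ * 0)) ?_ ?_
    · rw [this]; simp [ker]; field_simp; ring
    · intro x _
      have := ((hasDerivAt_id x).const_mul 2).sub (((hasDerivAt_id x).pow 2).div_const T)
      convert! this using 1
      simp; ring
    · apply Continuous.intervalIntegrable; fun_prop
  · rw [ker_eq hT hv]
    have := intervalIntegral.integral_eq_sub_of_hasDerivAt (a := 0) (b := T)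
      (f := fun τ => 2 * (1 - τ / T) * (Real.sin (τ * v) / v) - 2 / (T * v^2) * Real.cos (τ * v))
      (f' := fun τ => 2 * (1 - τ / T) * Real.cos (τ * v)) ?_ ?_
    · rw [this]; simp; field_simp; ring
    · intro x _
      have e1 : HasDerivAt (fun τ : ℝ => τ * v) v x := by simpa using (hasDerivAt_id x).mul_const v
      have e2 : HasDerivAt (fun τ : ℝ => 2 * (1 - τ / T)) (2 * (- (1 / T))) x := by
        have := (((hasDerivAt_id x).div_const T).const_sub 1).const_mul 2
        simpa using this
      have := (e2.mul (e1.sin.div_const v)).sub (e1.cos.const_mul (2 / (T * v^2)))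
      convert! this using 1
      field_simp; ring
    · apply Continuous.intervalIntegrable; fun_prop

lemma gAux_cont : ContinuousOn gAux {s | 1 ≤ s.re} :=
  vonMangoldt.continuousOn_LFunctionResidueClassAux _

lemma gAux_eq {s : ℂ} (hs : 1 < s.re) :
    gAux s = LSeries (fun n => (Λ n : ℂ)) s - 1 / (s - 1) := by
  have := vonMangoldt.eqOn_LFunctionResidueClassAux (q := 1) (a := 1) isUnit_one hs
  unfold gAux
  rw [this]
  simp only [Nat.totient_one, Nat.cast_one, inv_one]
  congr 2
  ext n
  congr 1
  simp [vonMangoldt.residueClass, Set.indicator, Subsingleton.elim (n : ZMod 1) 1]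

lemma gline_cont {σ : ℝ} (hσ : 1 ≤ σ) : Continuous fun τ : ℝ => gAux (σ + I * τ) := by
  refine gAux_cont.comp_continuous (by fun_prop) ?_
  intro τ; simp [hσ]

lemma pole_integral {T σ : ℝ} (hT : 0 < T) (hσ : 1 < σ) (y : ℝ) :
    ∫ τ in -T..T, (tri T τ : ℂ) * cexp (I * τ * y) * (1 / (σ + I * τ - 1)) = (Pm T σ y : ℂ) := by
  have h1 : ∀ τ : ℝ, 1 / (σ + I * τ - 1 : ℂ) = ∫ u in Set.Ioi (0:ℝ), cexp (-(σ + I * τ - 1) * u) := by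
    intro τ
    rw [integral_exp_mul_complex_Ioi (by simp; linarith)]
    simp only [ofReal_zero, mul_zero, Complex.exp_zero, neg_div_neg_eq]
  simp_rw [h1, ← integral_const_mul]
  rw [intervalIntegral.integral_of_le (by linarith), integral_integral_swap]
  · unfold Pm
    rw [← integral_complex_ofReal]
    refine integral_congr_ae (ae_of_all _ fun u => ?_)
    simp only
    push_cast
    rw [← fejer hT, intervalIntegral.integral_of_le (by linarith), ← integral_const_mul]
    refine integral_congr_ae (ae_of_all _ fun τ => ?_)
    simp only
    rw [mul_left_comm, mul_assoc, ← Complex.exp_add, ← Complex.exp_add]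
    congr 2
    push_cast; ring
  · have hb : Integrable (fun z : ℝ × ℝ => (1:ℝ) * Real.exp (-(σ - 1) * z.2))
        ((volume.restrict (Set.Ioc (-T) T)).prod (volume.restrict (Set.Ioi 0))) := by
      apply Integrable.mul_prod (f := fun _ => (1:ℝ)) (g := fun u => Real.exp (-(σ - 1) * u))
      · exact integrable_const _
      · exact integrableOn_exp_mul_Ioi (by linarith) 0
    refine hb.mono' ?_ ?_
    · apply Continuous.aestronglyMeasurable
      have := continuous_tri T
      fun_prop
    · rw [Measure.prod_restrict]
      refine (ae_restrict_iff' (measurableSet_Ioc.prod measurableSet_Ioi)).mpr (ae_of_all _ ?_)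
      rintro ⟨τ, u⟩ ⟨h1, h2⟩
      simp only [Function.uncurry, norm_mul, Complex.norm_exp, norm_real, Real.norm_eq_abs]
      have := tri_abs_le hT (Set.Ioc_subset_Icc_self h1)
      simp
      exact mul_le_of_le_one_left (Real.exp_pos _).le this

lemma main_identity {T σ : ℝ} (hT : 0 < T) (hσ : 1 < σ) (y : ℝ) :
    HasSum (fun n : ℕ => Λ n * (n:ℝ) ^ (-σ) * ker T (y - Real.log n)) (Pm T σ y + (Rm T σ y).re) := by
  set f : ℕ → ℂ := fun n => (Λ n : ℂ) with hf
  have key : HasSum (fun n => ∫ τ in -T..T, (tri T τ : ℂ) * cexp (I * τ * y) * LSeries.term f (σ + I * τ) n)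
      (∫ τ in -T..T, (tri T τ : ℂ) * cexp (I * τ * y) * LSeries f (σ + I * τ)) := by
    have hs : Summable (fun n => ‖LSeries.term f σ n‖) :=
      (LSeriesSummable_vonMangoldt (s := (σ:ℂ)) (by simpa using hσ)).norm
    apply intervalIntegral.hasSum_integral_of_dominated_convergence
      (bound := fun n _ => ‖LSeries.term f σ n‖)
    · intro n
      apply Continuous.aestronglyMeasurable
      have := continuous_tri T
      have : Continuous fun τ : ℝ => LSeries.term f (σ + I * τ) n := by
        rcases eq_or_ne n 0 with rfl | hn
        · simp; fun_prop
        · simp only [LSeries.term_of_ne_zero hn]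
          have hn' : (n:ℂ) ≠ 0 := by exact_mod_cast hn
          refine Continuous.div (by fun_prop) ?_ ?_
          · exact Continuous.const_cpow (by fun_prop) (Or.inl hn')
          · intro τ; simp [Complex.cpow_eq_zero_iff, hn']
      fun_prop
    · intro n
      refine ae_of_all _ fun τ hτ => ?_
      rw [Set.uIoc_of_le (by linarith)] at hτ
      have h1 := tri_abs_le hT (Set.Ioc_subset_Icc_self hτ)
      have h2 : ‖LSeries.term f (σ + I * τ) n‖ = ‖LSeries.term f σ n‖ := by
        rw [LSeries.norm_term_eq, LSeries.norm_term_eq]; simp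
      rw [norm_mul, norm_mul, h2, Complex.norm_exp]
      simp
      exact mul_le_of_le_one_left (norm_nonneg _) h1
    · exact ae_of_all _ fun _ _ => hs
    · simp
    · refine ae_of_all _ fun τ hτ => ?_
      apply HasSum.mul_left
      exact (LSeriesSummable_vonMangoldt (by simpa using hσ)).hasSum
  have e1 : ∀ n : ℕ, ∫ τ in -T..T, (tri T τ : ℂ) * cexp (I * τ * y) * LSeries.term f (σ + I * τ) n
      = ((Λ n * (n:ℝ) ^ (-σ) * ker T (y - Real.log n) : ℝ) : ℂ) := by
    intro n
    rcases eq_or_ne n 0 with rfl | hn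
    · simp
    · push_cast
      rw [← fejer hT, ← intervalIntegral.integral_const_mul]
      apply intervalIntegral.integral_congr
      intro τ _
      have hn' : (n:ℂ) ≠ 0 := by exact_mod_cast hn
      have hn0 : (0:ℝ) < n := by positivity
      simp only [LSeries.term_of_ne_zero hn, hf]
      have hp : (((n:ℝ) ^ (-σ) : ℝ) : ℂ) = cexp (-(Real.log n * σ)) := by
        rw [Real.rpow_def_of_pos hn0]; push_cast; congr 1; ring
      rw [hp, Complex.cpow_def_of_ne_zero hn', div_eq_mul_inv, ← Complex.exp_neg, Complex.natCast_log.symm]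
      have : ∀ a b c d x y: ℂ, a + b = c + d → x * cexp a * (y * cexp b) = y * cexp c * (x * cexp d) := by
        intro a b c d x y h
        calc _ = x * y * cexp (a + b) := by rw [Complex.exp_add]; ring
          _ = _ := by rw [h, Complex.exp_add]; ring
      apply this
      push_cast; ring
  have e2 : ∫ τ in -T..T, (tri T τ : ℂ) * cexp (I * τ * y) * LSeries f (σ + I * τ)
      = Pm T σ y + Rm T σ y := by
    rw [← pole_integral hT hσ, Rm, ← intervalIntegral.integral_add]
    · apply intervalIntegral.integral_congr
      intro τ _
      simp only
      rw [gAux_eq (by simpa using hσ)]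
      ring
    · apply Continuous.intervalIntegrable
      have := continuous_tri T
      have h0 : ∀ τ : ℝ, (σ + I * τ - 1 : ℂ) ≠ 0 := by
        intro τ h
        have := congrArg Complex.re h
        simp at this; linarith
      fun_prop (disch := exact h0 _)
    · apply Continuous.intervalIntegrable
      have := continuous_tri T
      have := gline_cont hσ.le
      fun_prop
  rw [e2] at key
  simp_rw [e1] at key
  have := Complex.hasSum_re key
  simpa using this


lemma Rm_tendsto_sigma {T : ℝ} (y : ℝ) :
    Tendsto (fun σ => (Rm T σ y).re) (𝓝[>] 1) (𝓝 (Rm T 1 y).re) := by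
  have hc : Continuous fun σ : ℝ => Rm T (max σ 1) y := by
    unfold Rm
    apply intervalIntegral.continuous_parametric_intervalIntegral_of_continuous'
    have h1 := continuous_tri T
    have h2 : Continuous fun z : ℝ × ℝ => gAux (((max z.1 1 : ℝ) : ℂ) + I * z.2) := by
      refine gAux_cont.comp_continuous (by fun_prop) ?_
      intro z; simp
    simp only [Function.uncurry_def]
    fun_prop
  have h3 := (Complex.continuous_re.comp hc).tendsto 1
  simp only [Function.comp_def, max_self] at h3
  refine (h3.mono_left nhdsWithin_le_nhds).congr' ?_
  filter_upwards [self_mem_nhdsWithin] with σ hσ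
  rw [max_eq_left (le_of_lt hσ)]

lemma Rm_tendsto_y {T : ℝ} (hT : 0 < T) :
    Tendsto (fun y => (Rm T 1 y).re) atTop (𝓝 0) := by
  set f : ℝ → ℂ := (Set.Ioc (-T) T).indicator fun τ => (tri T τ : ℂ) * gAux (1 + I * τ) with hf
  have h := Real.tendsto_integral_exp_smul_cocompact f
  have h2 : Tendsto (fun y : ℝ => -(y / (2 * Real.pi))) atTop (cocompact ℝ) := by
    refine Tendsto.mono_right ?_ atBot_le_cocompact
    exact tendsto_neg_atTop_atBot.comp (tendsto_id.atTop_div_const (by positivity))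
  have h3 := h.comp h2
  have h4 := (Complex.continuous_re.tendsto 0).comp h3
  simp only [Complex.zero_re] at h4
  refine h4.congr fun y => ?_
  simp only [Function.comp_def]
  congr 1
  unfold Rm
  rw [intervalIntegral.integral_of_le (by linarith), ← integral_indicator measurableSet_Ioc]
  refine integral_congr_ae (ae_of_all _ fun τ => ?_)
  simp only [hf, Set.indicator]
  split_ifs with hτ
  · rw [Circle.smul_def, Real.fourierChar_apply, smul_eq_mul]
    have : (2 * Real.pi * -(τ * -(y / (2 * Real.pi))) : ℝ) = τ * y := by
      field_simp
    rw [this]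
    push_cast
    rw [show (τ:ℂ) * y * I = I * τ * y by ring]
    ring
  · simp

lemma ker_one_le (v : ℝ) : ker 1 v ≤ 5 * (1 + v ^ 2)⁻¹ := by
  rw [← div_eq_mul_inv, le_div_iff₀ (by positivity)]
  have h1 := ker_le one_pos v
  by_cases hv : v = 0
  · subst hv; nlinarith
  · have h2 := ker_le' one_pos hv
    have : 0 < v ^ 2 := by positivity
    rw [one_mul, le_div_iff₀ this] at h2
    linarith

lemma Pm_integrable {T σ : ℝ} (hT : 0 < T) (hσ : 1 < σ) (y : ℝ) :
    IntegrableOn (fun u => Real.exp (-(u * (σ - 1))) * ker T (y - u)) (Set.Ioi 0) := by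
  have hb : IntegrableOn (fun u => Real.exp (-(σ - 1) * u) * T) (Set.Ioi 0) :=
    (integrableOn_exp_mul_Ioi (by linarith) 0).mul_const T
  refine hb.mono' ?_ (ae_of_all _ fun u => ?_)
  · apply Continuous.aestronglyMeasurable
    have := continuous_ker T
    fun_prop
  · have := ker_nonneg hT (y - u)
    rw [Real.norm_of_nonneg (by positivity), show -(σ - 1) * u = -(u * (σ - 1)) by ring]
    gcongr
    exact ker_le hT _

lemma Pm_le {σ : ℝ} (hσ : 1 < σ) (y : ℝ) : Pm 1 σ y ≤ 5 * Real.pi := by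
  have hI : Integrable (fun u : ℝ => 5 * (1 + (y - u) ^ 2)⁻¹) :=
    (integrable_inv_one_add_sq.comp_sub_left y).const_mul 5
  calc Pm 1 σ y ≤ ∫ u in Set.Ioi (0:ℝ), 5 * (1 + (y - u) ^ 2)⁻¹ := by
        refine setIntegral_mono_on (Pm_integrable one_pos hσ y) hI.integrableOn measurableSet_Ioi ?_
        intro u hu
        have h1 : Real.exp (-(u * (σ - 1))) ≤ 1 := by
          rw [Real.exp_le_one_iff]
          have : 0 < u := hu
          nlinarith [mul_pos this (sub_pos.mpr hσ)]
        exact (mul_le_of_le_one_left (ker_nonneg one_pos _) h1).trans (ker_one_le _)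
    _ ≤ ∫ u, 5 * (1 + (y - u) ^ 2)⁻¹ :=
        setIntegral_le_integral hI (ae_of_all _ fun u => by simp only [Pi.zero_apply]; positivity)
    _ = 5 * Real.pi := by
        rw [integral_const_mul, integral_sub_left_eq_self (fun u : ℝ => (1 + u ^ 2)⁻¹) volume y,
          integral_univ_inv_one_add_sq]

lemma ker_ge {T v : ℝ} (hT : 0 < T) (hv : |T * v| ≤ 1) : 4 / Real.pi ^ 2 * T ≤ ker T v := by
  by_cases h : v = 0
  · subst h
    simp only [ker, mul_zero, zero_div, Real.sinc_zero, one_pow, mul_one]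
    have : 4 / Real.pi ^ 2 ≤ 1 := by
      rw [div_le_one (by positivity)]
      nlinarith [Real.pi_gt_three]
    exact mul_le_of_le_one_left hT.le this
  · rw [ker_eq hT h, le_div_iff₀ (by positivity)]
    have := Real.cos_le_one_sub_mul_cos_sq (x := T * v) (by linarith [Real.pi_gt_three])
    calc _ = 2 * (2 / Real.pi ^ 2 * (T * v) ^ 2) := by ring
      _ ≤ _ := by linarith

lemma Pm_ge {T σ y : ℝ} (hT : 1 ≤ T) (hσ : 1 < σ) (hy : 1 ≤ y) :
    4 / Real.pi ^ 2 * Real.exp (-(y * (σ - 1))) ≤ Pm T σ y := by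
  have hT0 : 0 < T := by linarith
  have hTi : 1 / T ≤ 1 := (div_le_one hT0).mpr hT
  have hTi0 : 0 < 1 / T := by positivity
  have hsub : Set.Ioc (y - 1 / T) y ⊆ Set.Ioi 0 := by
    intro u hu
    have := hu.1
    simp only [Set.mem_Ioi]; linarith
  calc 4 / Real.pi ^ 2 * Real.exp (-(y * (σ - 1)))
      = ∫ u in Set.Ioc (y - 1 / T) y, Real.exp (-(y * (σ - 1))) * (4 / Real.pi ^ 2 * T) := by
        rw [setIntegral_const]
        simp only [measureReal_def, Real.volume_Ioc, smul_eq_mul]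
        rw [ENNReal.toReal_ofReal (by linarith)]
        field_simp
        ring
    _ ≤ ∫ u in Set.Ioc (y - 1 / T) y, Real.exp (-(u * (σ - 1))) * ker T (y - u) := by
        refine setIntegral_mono_on (integrableOn_const (by simp)) ((Pm_integrable hT0 hσ y).mono_set hsub)
          measurableSet_Ioc ?_
        intro u hu
        have hk := ker_ge (v := y - u) hT0 (by
          have h1 := hu.1
          have h2 := hu.2
          rw [abs_of_nonneg (mul_nonneg hT0.le (by linarith))]
          calc T * (y - u) ≤ T * (1 / T) := by gcongr; linarith
            _ = 1 := by field_simp)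
        have he : Real.exp (-(y * (σ - 1))) ≤ Real.exp (-(u * (σ - 1))) := by
          apply Real.exp_le_exp.mpr
          nlinarith [mul_nonneg (sub_nonneg.mpr hu.2) (sub_nonneg.mpr hσ.le)]
        gcongr
    _ ≤ Pm T σ y := by
        refine setIntegral_mono_set (Pm_integrable hT0 hσ y) ?_ (ae_of_all _ hsub)
        exact ae_of_all _ fun u => mul_nonneg (Real.exp_pos _).le (ker_nonneg hT0 _)

lemma tail_bound {T δ v : ℝ} (hT : 0 < T) (hδ : 0 < δ) (hv : δ ≤ |v|) :
    ker T v ≤ (1 + Real.pi / δ) ^ 2 / T * (ker 1 v + ker 1 (v + Real.pi)) := by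
  have hv0 : v ≠ 0 := by
    rintro rfl
    simp at hv; linarith
  have hpi := Real.pi_pos
  set D := (1 + Real.pi / δ) ^ 2 with hD
  have hD1 : 1 ≤ D := by
    have : 0 ≤ Real.pi / δ := by positivity
    rw [hD]; nlinarith
  have hv2 : 0 < v ^ 2 := by positivity
  have h2 : (v + Real.pi) ^ 2 ≤ D * v ^ 2 := by
    rw [hD, ← mul_pow, ← sq_abs, ← sq_abs (_ * v)]
    refine pow_le_pow_left₀ (abs_nonneg _) ?_ 2
    rw [abs_mul, abs_of_nonneg (by positivity : 0 ≤ 1 + Real.pi / δ)]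
    have h3 : Real.pi ≤ Real.pi / δ * |v| := by
      rw [div_mul_eq_mul_div, le_div_iff₀ hδ]
      gcongr
    calc |v + Real.pi| ≤ |v| + |Real.pi| := abs_add_le _ _
      _ = |v| + Real.pi := by rw [abs_of_pos hpi]
      _ ≤ _ := by linarith
  have key : 4 / (D * v ^ 2) ≤ ker 1 v + ker 1 (v + Real.pi) := by
    have a1 : 2 * (1 - Real.cos v) / (D * v ^ 2) ≤ ker 1 v := by
      rw [ker_eq one_pos hv0]
      simp only [one_mul]
      have := Real.cos_le_one v
      have : 0 ≤ 2 * (1 - Real.cos v) := by linarith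
      apply div_le_div_of_nonneg_left this hv2
      nlinarith
    have a2 : 2 * (1 + Real.cos v) / (D * v ^ 2) ≤ ker 1 (v + Real.pi) := by
      by_cases h : v + Real.pi = 0
      · have : v = -Real.pi := by linarith
        rw [this]; simp
        exact ker_nonneg one_pos _
      · rw [ker_eq one_pos h]
        simp only [one_mul, Real.cos_add_pi, sub_neg_eq_add]
        have := Real.neg_one_le_cos v
        have : 0 ≤ 2 * (1 + Real.cos v) := by linarith
        exact div_le_div_of_nonneg_left this (by positivity) h2
    calc 4 / (D * v ^ 2) = 2 * (1 - Real.cos v) / (D * v ^ 2) + 2 * (1 + Real.cos v) / (D * v ^ 2) := by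
          ring
      _ ≤ _ := add_le_add a1 a2
  calc ker T v ≤ 4 / (T * v ^ 2) := ker_le' hT hv0
    _ = D / T * (4 / (D * v ^ 2)) := by field_simp
    _ ≤ _ := by gcongr

theorem exists_primePow_near {δ : ℝ} (hδ : 0 < δ) :
    ∃ Y : ℝ, ∀ y ≥ Y, ∃ q : ℕ, IsPrimePow q ∧ |y - Real.log q| < δ := by
  have hpi := Real.pi_pos
  set D := (1 + Real.pi / δ) ^ 2 with hD
  have hD0 : 0 < D := by positivity
  set c := 4 / Real.pi ^ 2 with hc
  have hc0 : 0 < c := by positivity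
  set T := max 1 (D * (10 * Real.pi + 2) * 2 / c) with hT
  have hT1 : 1 ≤ T := le_max_left _ _
  have hT0 : 0 < T := by linarith
  have hT2 : D / T * (10 * Real.pi + 2) ≤ c / 2 := by
    have : D * (10 * Real.pi + 2) * 2 / c ≤ T := le_max_right _ _
    rw [div_le_iff₀ hc0] at this
    rw [div_mul_eq_mul_div, div_le_iff₀ hT0]
    linarith
  have ev1 := (Rm_tendsto_y hT0).eventually (lt_mem_nhds (show -(c / 2) < 0 by linarith))
  have ev2 := (Rm_tendsto_y one_pos).eventually (gt_mem_nhds (show (0:ℝ) < 1 by norm_num))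
  have ev3 := (tendsto_atTop_add_const_right atTop Real.pi tendsto_id).eventually ev2
  obtain ⟨Y, hY⟩ := eventually_atTop.mp (ev1.and (ev2.and (ev3.and (eventually_ge_atTop 1))))
  refine ⟨Y, fun y hy => ?_⟩
  obtain ⟨h1, h2, h3, h4⟩ := hY y hy
  by_contra hcon
  push Not at hcon
  have ineq : ∀ σ > (1:ℝ), c * Real.exp (-(y * (σ - 1))) + (Rm T σ y).re ≤
      D / T * (10 * Real.pi + (Rm 1 σ y).re + (Rm 1 σ (y + Real.pi)).re) := by
    intro σ hσ
    have s1 := main_identity hT0 hσ y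
    have s2 := ((main_identity one_pos hσ y).add (main_identity one_pos hσ (y + Real.pi))).mul_left (D / T)
    have h := hasSum_le (fun n => ?_) s1 s2
    · have p1 := Pm_ge hT1 hσ h4
      have p2 := Pm_le hσ y
      have p3 := Pm_le hσ (y + Real.pi)
      have : D / T * (Pm 1 σ y + (Rm 1 σ y).re + (Pm 1 σ (y + Real.pi) + (Rm 1 σ (y + Real.pi)).re))
          ≤ D / T * (10 * Real.pi + (Rm 1 σ y).re + (Rm 1 σ (y + Real.pi)).re) := by
        gcongr ?_ * ?_
        linarith
      linarith
    · by_cases hn : IsPrimePow n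
      · have tb := tail_bound (T := T) hT0 hδ (hcon n hn)
        rw [show y - Real.log n + Real.pi = y + Real.pi - Real.log n by ring] at tb
        have hw : 0 ≤ Λ n * (n:ℝ) ^ (-σ) := mul_nonneg vonMangoldt_nonneg (by positivity)
        calc _ ≤ Λ n * (n:ℝ) ^ (-σ) * _ := mul_le_mul_of_nonneg_left tb hw
          _ = _ := by ring
      · have : Λ n = 0 := by
          by_contra h0
          exact hn (vonMangoldt_ne_zero_iff.mp h0)
        simp [this]
  have lim1 : Tendsto (fun σ : ℝ => c * Real.exp (-(y * (σ - 1))) + (Rm T σ y).re) (𝓝[>] 1)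
      (𝓝 (c * Real.exp (-(y * (1 - 1))) + (Rm T 1 y).re)) := by
    refine Tendsto.add ?_ (Rm_tendsto_sigma y)
    refine Tendsto.mono_left (Continuous.tendsto ?_ 1) nhdsWithin_le_nhds
    fun_prop
  have lim2 : Tendsto (fun σ : ℝ => D / T * (10 * Real.pi + (Rm 1 σ y).re + (Rm 1 σ (y + Real.pi)).re))
      (𝓝[>] 1) (𝓝 (D / T * (10 * Real.pi + (Rm 1 1 y).re + (Rm 1 1 (y + Real.pi)).re))) :=
    ((tendsto_const_nhds.add (Rm_tendsto_sigma y)).add (Rm_tendsto_sigma _)).const_mul _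
  have fin := le_of_tendsto_of_tendsto lim1 lim2 (by
    filter_upwards [self_mem_nhdsWithin] with σ hσ using ineq σ hσ)
  simp only [sub_self, mul_zero, neg_zero, Real.exp_zero, mul_one] at fin
  simp only [id] at h3
  have : D / T * (10 * Real.pi + (Rm 1 1 y).re + (Rm 1 1 (y + Real.pi)).re)
      ≤ D / T * (10 * Real.pi + 2) := by
    gcongr ?_ * ?_
    linarith
  linarith

end PPGap
namespace BtConstr

lemma core {P L : Type*} (I : P → L → Prop)
    (hI : ∀ p p' l l', I p l → I p' l → I p l' → I p' l' → p = p' ∨ l = l')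
    {k l t : ℕ} (hkl : k + l ≤ t + 1) (p : P × Fin k) (m : L × Fin l)
    (w : Fin t → L × Fin l) (x : Fin t → P × Fin k)
    (hw : Function.Injective w) (hx : Function.Injective x)
    (hwm : ∀ j, w j ≠ m) (hxp : ∀ j, x j ≠ p)
    (h1 : I p.1 m.1) (h2 : ∀ j, I p.1 (w j).1) (h3 : ∀ j, I (x j).1 m.1)
    (h4 : ∀ j, I (x j).1 (w j).1) : False := by
  classical
  have key : ∀ j, p.1 = (x j).1 ∨ m.1 = (w j).1 := fun j => hI _ _ _ _ h1 (h3 j) (h2 j) (h4 j)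
  let φ : Fin 2 ⊕ Fin t → Fin k ⊕ Fin l := fun s => match s with
    | Sum.inl 0 => Sum.inl p.2
    | Sum.inl 1 => Sum.inr m.2
    | Sum.inr j => if p.1 = (x j).1 then Sum.inl (x j).2 else Sum.inr (w j).2
  have hφ : Function.Injective φ := by
    have c1 : ∀ j, φ (Sum.inr j) ≠ Sum.inl p.2 := by
      intro j h
      simp only [φ] at h
      split_ifs at h with hp
      · exact hxp j (Prod.ext hp.symm (Sum.inl.inj h))
    have c2 : ∀ j, φ (Sum.inr j) ≠ Sum.inr m.2 := by
      intro j h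
      simp only [φ] at h
      split_ifs at h with hp
      · exact hwm j (Prod.ext ((key j).resolve_left hp).symm (Sum.inr.inj h))
    rintro (a | a) (b | b) h
    · fin_cases a <;> fin_cases b <;> simp [φ] at h ⊢
    · fin_cases a
      · exact absurd h.symm (c1 b)
      · exact absurd h.symm (c2 b)
    · fin_cases b
      · exact absurd h (c1 a)
      · exact absurd h (c2 a)
    · simp only [φ] at h
      congr 1
      split_ifs at h with ha hb hb
      · exact hx (Prod.ext (ha.symm.trans hb) (Sum.inl.inj h))
      · exact hw (Prod.ext (((key a).resolve_left ha).symm.trans ((key b).resolve_left hb))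
          (Sum.inr.inj h))
  have := Fintype.card_le_of_injective φ hφ
  simp at this
  omega

/-- The blown-up incidence graph, placed on `Fin n` through an embedding. -/
def gr {P L : Type*} (I : P → L → Prop) {k l n : ℕ}
    (e : (P × Fin k) ⊕ (L × Fin l) ↪ Fin n) : SimpleGraph (Fin n) where
  Adj u v := ∃ a b, I a.1 b.1 ∧ ((u = e (Sum.inl a) ∧ v = e (Sum.inr b)) ∨
    (v = e (Sum.inl a) ∧ u = e (Sum.inr b)))
  symm := ⟨by
    rintro u v ⟨a, b, h, h'⟩
    exact ⟨a, b, h, h'.symm⟩⟩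
  loopless := ⟨by
    rintro u ⟨a, b, h, ⟨h1, h2⟩ | ⟨h1, h2⟩⟩ <;>
    · rw [h1] at h2
      simpa using e.injective h2⟩

section
variable {P L : Type*} (I : P → L → Prop) {k l n : ℕ} (e : (P × Fin k) ⊕ (L × Fin l) ↪ Fin n)

lemma gr_adj_inl {a : P × Fin k} {v : Fin n} (h : (gr I e).Adj (e (Sum.inl a)) v) :
    ∃ b, v = e (Sum.inr b) ∧ I a.1 b.1 := by
  obtain ⟨a', b, h, ⟨h1, h2⟩ | ⟨h1, h2⟩⟩ := h
  · have := e.injective h1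
    simp only [Sum.inl.injEq] at this
    subst this
    exact ⟨b, h2, h⟩
  · have := e.injective h2
    simp at this

lemma gr_adj_inr {b : L × Fin l} {v : Fin n} (h : (gr I e).Adj (e (Sum.inr b)) v) :
    ∃ a, v = e (Sum.inl a) ∧ I a.1 b.1 := by
  obtain ⟨a', b', h, ⟨h1, h2⟩ | ⟨h1, h2⟩⟩ := h
  · have := e.injective h1
    simp at this
  · have := e.injective h2
    simp only [Sum.inr.injEq] at this
    subst this
    exact ⟨a', h1, h⟩

lemma gr_adj_iff {a : P × Fin k} {b : L × Fin l} (h : (gr I e).Adj (e (Sum.inl a)) (e (Sum.inr b))) :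
    I a.1 b.1 := by
  obtain ⟨b', h1, h2⟩ := gr_adj_inl I e h
  have := e.injective h1
  simp only [Sum.inr.injEq] at this
  rwa [this]

lemma gr_colorable : (gr I e).Colorable 2 := by
  classical
  refine ⟨Coloring.mk (fun v => if ∃ a, v = e (Sum.inl a) then 0 else 1) ?_⟩
  have hr : ∀ b, ¬ ∃ a, e (Sum.inr b) = e (Sum.inl a) := by
    rintro b ⟨a, h⟩
    simpa using e.injective h
  rintro u v ⟨a, b, h, ⟨rfl, rfl⟩ | ⟨rfl, rfl⟩⟩ <;> simp [hr]

lemma gr_free (hI : ∀ p p' l l', I p l → I p' l → I p l' → I p' l' → p = p' ∨ l = l')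
    {t : ℕ} (hkl : k + l ≤ t + 1) : ¬ ContainsCopy (Bgraph t) (gr I e) := by
  rintro ⟨f, hf, hadj⟩
  have a1 : (gr I e).Adj (f (0, Sum.inl 0)) (f (1, Sum.inl 0)) := hadj (by simp [Bgraph])
  have a2 : ∀ j, (gr I e).Adj (f (0, Sum.inl 0)) (f (0, Sum.inr j)) := fun j => hadj (by simp [Bgraph])
  have a3 : ∀ j, (gr I e).Adj (f (1, Sum.inl 0)) (f (1, Sum.inr j)) := fun j => hadj (by simp [Bgraph])
  have a4 : ∀ j, (gr I e).Adj (f (0, Sum.inr j)) (f (1, Sum.inr j)) := fun j => hadj (by simp [Bgraph])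
  have n1 : ∀ j, f (0, Sum.inr j) ≠ f (1, Sum.inl 0) := fun j h => by simpa using hf h
  have n2 : ∀ j, f (1, Sum.inr j) ≠ f (0, Sum.inl 0) := fun j h => by simpa using hf h
  have n3 : ∀ i, Function.Injective fun j => f (i, Sum.inr j) := fun i j j' h => by simpa using hf h
  obtain ⟨a, b, hab, ⟨hu, hv⟩ | ⟨hv, hu⟩⟩ := id a1
  · rw [hu] at a2 n2
    rw [hv] at a3 n1
    choose w hw hw' using fun j => gr_adj_inl I e (a2 j)
    choose x hx hx' using fun j => gr_adj_inr I e (a3 j)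
    simp only [hw, hx] at a4 n1 n2
    have n30 := n3 0
    have n31 := n3 1
    simp only [hw, hx] at n30 n31
    refine core I hI hkl a b w x ?_ ?_ ?_ ?_ hab hw' hx' fun j => gr_adj_iff I e (a4 j).symm
    · intro j j' h; exact n30 (by simp [h])
    · intro j j' h; exact n31 (by simp [h])
    · intro j h; exact n1 j (by simp [h])
    · intro j h; exact n2 j (by simp [h])
  · rw [hu] at a2 n2
    rw [hv] at a3 n1
    choose w hw hw' using fun j => gr_adj_inr I e (a2 j)
    choose x hx hx' using fun j => gr_adj_inl I e (a3 j)
    simp only [hw, hx] at a4 n1 n2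
    have n30 := n3 0
    have n31 := n3 1
    simp only [hw, hx] at n30 n31
    refine core I hI hkl a b x w ?_ ?_ ?_ ?_ hab hx' hw' fun j => gr_adj_iff I e (a4 j)
    · intro j j' h; exact n31 (by simp [h])
    · intro j j' h; exact n30 (by simp [h])
    · intro j h; exact n2 j (by simp [h])
    · intro j h; exact n1 j (by simp [h])
end

lemma exists_field {q : ℕ} (hq : IsPrimePow q) :
    ∃ (F : Type) (_ : Field F) (_ : Fintype F), Fintype.card F = q := by
  obtain ⟨p, m, hp, hm, rfl⟩ := hq
  have : Fact p.Prime := ⟨hp.nat_prime⟩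
  letI : Fintype (GaloisField p m) := Fintype.ofFinite _
  refine ⟨GaloisField p m, inferInstance, inferInstance, ?_⟩
  rw [← Nat.card_eq_fintype_card, GaloisField.card p m hm.ne']

lemma construction {q k l t n : ℕ} (hq : IsPrimePow q) (hkl : k + l = t + 1)
    (hn : (t + 1) * q ^ 2 ≤ n) :
    ∃ G : SimpleGraph (Fin n), G.Colorable 2 ∧ ¬ ContainsCopy (Bgraph t) G ∧
      k * l * q ^ 3 ≤ G.edgeSet.ncard := by
  classical
  obtain ⟨F, _, _, hF⟩ := exists_field hq
  let I : F × F → F × F → Prop := fun p m => p.2 = m.1 * p.1 + m.2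
  have hI : ∀ p p' l l', I p l → I p' l → I p l' → I p' l' → p = p' ∨ l = l' := by
    rintro ⟨x, y⟩ ⟨x', y'⟩ ⟨m, b⟩ ⟨m', b'⟩ h1 h2 h3 h4
    simp only [I] at h1 h2 h3 h4
    have : (m - m') * (x - x') = 0 := by linear_combination h2 + h3 - h1 - h4
    rcases mul_eq_zero.mp this with h | h
    · right
      have hm : m = m' := sub_eq_zero.mp h
      subst hm
      ext <;> simp
      linear_combination h3 - h1
    · left
      have hm : x = x' := sub_eq_zero.mp h
      subst hm
      ext <;> simp
      rw [h1, h2]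
  have hcard : Fintype.card (((F × F) × Fin k) ⊕ ((F × F) × Fin l)) ≤ Fintype.card (Fin n) := by
    simp only [Fintype.card_sum, Fintype.card_prod, Fintype.card_fin, hF]
    calc _ = (k + l) * q ^ 2 := by ring
      _ ≤ n := by rw [hkl]; exact hn
  obtain ⟨e⟩ := Function.Embedding.nonempty_of_card_le hcard
  refine ⟨gr I e, gr_colorable I e, gr_free I e hI hkl.le, ?_⟩
  let φ : (F × F × F) × Fin k × Fin l → Sym2 (Fin n) := fun z =>
    s(e (Sum.inl ((z.1.1, z.1.2.1 * z.1.1 + z.1.2.2), z.2.1)), e (Sum.inr ((z.1.2.1, z.1.2.2), z.2.2)))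
  have hφ : Function.Injective φ := by
    rintro ⟨⟨x, m, b⟩, i, j⟩ ⟨⟨x', m', b'⟩, i', j'⟩ h
    simp only [φ, Sym2.eq_iff, e.injective.eq_iff] at h
    simp at h
    simp [h]
  have hsub : Set.range φ ⊆ (gr I e).edgeSet := by
    rintro _ ⟨z, rfl⟩
    rw [SimpleGraph.mem_edgeSet]
    exact ⟨_, _, rfl, Or.inl ⟨rfl, rfl⟩⟩
  calc k * l * q ^ 3 = Nat.card ((F × F × F) × Fin k × Fin l) := by
        simp only [Nat.card_eq_fintype_card, Fintype.card_prod, Fintype.card_fin, hF]; ring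
    _ = (Set.range φ).ncard := by
        rw [← Set.image_univ, Set.ncard_image_of_injective _ hφ, Set.ncard_univ]
    _ ≤ _ := Set.ncard_le_ncard hsub (Set.toFinite _)

end BtConstr

theorem ex_bip_Bt_lower_even (t : ℕ) (ht : 2 ≤ t) (heven : Even t) (ε : ℝ) (hε : 0 < ε) :
    ∃ N : ℕ, ∀ n : ℕ, N ≤ n → ∃ G : SimpleGraph (Fin n),
      G.Colorable 2 ∧ ¬ ContainsCopy (Bgraph t) G ∧
      ((1 / 4 : ℝ) * ((t : ℝ) * ((t : ℝ) + 2)) / ((t : ℝ) + 1) ^ (3/2 : ℝ) - ε)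
          * (n : ℝ) ^ (3/2 : ℝ)
        ≤ (G.edgeSet.ncard : ℝ) := by
  obtain ⟨r, hr⟩ := heven
  set C : ℝ := (1 / 4 : ℝ) * ((t : ℝ) * ((t : ℝ) + 2)) / ((t : ℝ) + 1) ^ (3/2 : ℝ) with hC
  have ht1 : (0:ℝ) < (t:ℝ) + 1 := by positivity
  have hC0 : 0 ≤ C := by positivity
  -- choose the relative precision
  set δ : ℝ := ε / (6 * (C + 1)) with hδ
  have hδ0 : 0 < δ := by positivity
  have hδC : C - ε ≤ C * Real.exp (-(6 * δ)) := by
    have h1 : 1 - 6 * δ ≤ Real.exp (-(6 * δ)) := by linarith [Real.add_one_le_exp (-(6 * δ))]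
    have h2 : C * (6 * δ) ≤ ε := by
      have : C * (6 * δ) = ε * (C / (C + 1)) := by rw [hδ]; field_simp
      rw [this]
      exact mul_le_of_le_one_right hε.le ((div_le_one (by linarith)).mpr (by linarith))
    nlinarith [mul_le_mul_of_nonneg_left h1 hC0]
  obtain ⟨Y, hY⟩ := PPGap.exists_primePow_near hδ0
  refine ⟨⌈((t:ℝ) + 1) * Real.exp (2 * (Y + δ))⌉₊ + 1, fun n hn => ?_⟩
  have hn1 : ((t:ℝ) + 1) * Real.exp (2 * (Y + δ)) ≤ n := by
    refine (Nat.le_ceil _).trans ?_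
    exact_mod_cast (by omega : ⌈((t:ℝ) + 1) * Real.exp (2 * (Y + δ))⌉₊ ≤ n)
  have hn0 : (0:ℝ) < n := lt_of_lt_of_le (by positivity) hn1
  set x : ℝ := n / ((t:ℝ) + 1) with hx
  have hx0 : 0 < x := by positivity
  have hxY : Y + δ ≤ Real.log x / 2 := by
    have : Real.exp (2 * (Y + δ)) ≤ x := by
      rw [hx, le_div_iff₀ ht1]; linarith
    have := (Real.le_log_iff_exp_le hx0).mpr this
    linarith
  obtain ⟨q, hq, hql⟩ := hY (Real.log x / 2 - δ) (by linarith)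
  rw [abs_lt] at hql
  have hq0 : (0:ℝ) < q := by exact_mod_cast hq.pos
  have hq2 : (q:ℝ) ^ 2 ≤ x := by
    rw [← Real.log_le_log_iff (by positivity) hx0, Real.log_pow]
    push_cast
    linarith [hql.1]
  have hq3 : x ^ (3/2 : ℝ) * Real.exp (-(6 * δ)) ≤ (q:ℝ) ^ 3 := by
    rw [← Real.log_le_log_iff (by positivity) (by positivity), Real.log_pow,
      Real.log_mul (by positivity) (by positivity), Real.log_rpow hx0, Real.log_exp]
    push_cast
    linarith [hql.2]
  have hnq : (t + 1) * q ^ 2 ≤ n := by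
    rw [hx, le_div_iff₀ ht1] at hq2
    have : (((t + 1) * q ^ 2 : ℕ) : ℝ) ≤ n := by push_cast; linarith
    exact_mod_cast this
  obtain ⟨G, h1, h2, h3⟩ := BtConstr.construction (k := r) (l := r + 1) hq (by omega) hnq
  refine ⟨G, h1, h2, ?_⟩
  have h3' : (r:ℝ) * (r + 1) * (q:ℝ) ^ 3 ≤ (G.edgeSet.ncard : ℝ) := by exact_mod_cast h3
  refine le_trans ?_ h3'
  have htr : (t:ℝ) = r + r := by exact_mod_cast hr
  have hCx : C * (n:ℝ) ^ (3/2 : ℝ) = (r:ℝ) * (r + 1) * x ^ (3/2 : ℝ) := by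
    rw [hx, Real.div_rpow hn0.le ht1.le, hC, htr]
    ring
  calc (C - ε) * (n:ℝ) ^ (3/2 : ℝ) ≤ C * Real.exp (-(6 * δ)) * (n:ℝ) ^ (3/2 : ℝ) := by gcongr
    _ = (r:ℝ) * (r + 1) * (x ^ (3/2 : ℝ) * Real.exp (-(6 * δ))) := by
        rw [mul_right_comm, hCx]; ring
    _ ≤ _ := by gcongr
end

section
/- For every real c > 0 and every ε > 0 there exists N such that for all n ≥ N, every graph G on n vertices containing no subgraph isomorphic to B_2 and having minimum degree δ(G) ≥ c·n^{1/2} satisfies e(G) ≤ ((−c + √(c² + 32))/8 + ε)·n^{3/2}. -/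
open SimpleGraph

section aux
open Classical Finset

/-- The concrete form of being `B₂`-free. -/
def NoB2 {V : Type*} (G : SimpleGraph V) : Prop :=
  ∀ x v a b a' b' : V, G.Adj x v → G.Adj x a → G.Adj v b → G.Adj a b →
    G.Adj x a' → G.Adj v b' → G.Adj a' b' → a ≠ v → b ≠ x → a' ≠ v → b' ≠ x →
    (a = a' ∨ a = b' ∨ b = a' ∨ b = b')

theorem noB2_of {V : Type*} (G : SimpleGraph V) (h : ¬ ContainsCopy (Bgraph 2) G) : NoB2 G := by
  intro x v a b a' b' hxv hxa hvb hab hxa' hvb' hab' h1 h2 h3 h4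
  by_contra hcon
  push Not at hcon
  obtain ⟨n1, n2, n3, n4⟩ := hcon
  apply h
  let f : Fin 2 × (Fin 1 ⊕ Fin 2) → V := fun p =>
    match p with
    | (0, Sum.inl _) => x
    | (1, Sum.inl _) => v
    | (0, Sum.inr 0) => a
    | (1, Sum.inr 0) => b
    | (0, Sum.inr 1) => a'
    | (1, Sum.inr 1) => b'
  have e1 := hxv.ne
  have e2 := hxa.ne
  have e3 := hvb.ne
  have e4 := hab.ne
  have e5 := hxa'.ne
  have e6 := hvb'.ne
  have e7 := hab'.ne
  refine ⟨f, ?_, ?_⟩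
  · rintro ⟨i, j⟩ ⟨k, l⟩ hh
    rcases j with j | j <;> rcases l with l | l <;> fin_cases i <;> fin_cases k <;>
      fin_cases j <;> fin_cases l <;> simp [f] at hh ⊢ <;> grind
  · rintro ⟨i, j⟩ ⟨k, l⟩ hh
    rcases j with j | j <;> rcases l with l | l <;> fin_cases i <;> fin_cases k <;>
      fin_cases j <;> fin_cases l <;> simp [f, Bgraph, SimpleGraph.boxProd_adj] at hh ⊢ <;>
      first | assumption | (apply SimpleGraph.Adj.symm; assumption)

theorem inter_family {V : Type*} (P : V → V → Prop)
    (hint : ∀ a b a' b', P a b → P a' b' → (a = a' ∨ a = b' ∨ b = a' ∨ b = b')) :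
    (∃ z, ∀ a b, P a b → a = z ∨ b = z) ∨
      ∃ T : Finset V, T.card ≤ 3 ∧ ∀ a b, P a b → a ∈ T ∧ b ∈ T := by
  by_cases h0 : ∃ a b, P a b
  · obtain ⟨a, b, hab⟩ := h0
    by_cases hA : ∀ p q, P p q → p = a ∨ q = a
    · exact Or.inl ⟨a, hA⟩
    by_cases hB : ∀ p q, P p q → p = b ∨ q = b
    · exact Or.inl ⟨b, hB⟩
    right
    push Not at hA hB
    obtain ⟨p, q, hpq, hp, hq⟩ := hA
    obtain ⟨r, s, hrs, hr, hs⟩ := hB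
    have i1 := hint _ _ _ _ hab hpq
    have i2 := hint _ _ _ _ hab hrs
    have i3 := hint _ _ _ _ hpq hrs
    obtain ⟨c, hca, hcb, hc1, hc2⟩ : ∃ c, c ≠ a ∧ c ≠ b ∧ ((p = b ∧ q = c) ∨ (p = c ∧ q = b)) ∧
        ((r = a ∧ s = c) ∨ (r = c ∧ s = a)) := by
      by_cases hpb : p = b
      · refine ⟨q, ?_⟩
        grind
      · refine ⟨p, ?_⟩
        grind
    refine ⟨{a, b, c}, card_le_three, ?_⟩
    intro y w hyw
    have j1 := hint _ _ _ _ hyw hab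
    have j2 := hint _ _ _ _ hyw hpq
    have j3 := hint _ _ _ _ hyw hrs
    simp only [mem_insert, mem_singleton]
    grind
  · right
    push Not at h0
    exact ⟨∅, by simp, fun a b hab => absurd hab (h0 a b)⟩

variable {V : Type*} [Fintype V]

/-- Crossing pairs of the edge `xv`. -/
def Cr (G : SimpleGraph V) (x v a b : V) : Prop :=
  G.Adj x a ∧ a ≠ v ∧ G.Adj v b ∧ b ≠ x ∧ G.Adj a b

/-- All crossing pairs contain `z`. -/
def St (G : SimpleGraph V) (x v z : V) : Prop :=
  ∀ a b, Cr G x v a b → a = z ∨ b = z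

/-- `z` is the unique centre. -/
def US (G : SimpleGraph V) (x v z : V) : Prop :=
  St G x v z ∧ ∀ z', St G x v z' → z' = z

/-- special triangle -/
def Sp (G : SimpleGraph V) (x v z : V) : Prop :=
  G.Adj x v ∧ G.Adj x z ∧ G.Adj v z ∧ US G x v z ∧ US G v z x ∧ US G x z v

/-- common neighbours -/
noncomputable def cn (G : SimpleGraph V) (x w : V) : Finset V :=
  univ.filter fun a => G.Adj x a ∧ G.Adj w a

/-- weight -/
noncomputable def ph (G : SimpleGraph V) (x w : V) : ℝ := 2 / ((cn G x w).card : ℝ) - 1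

/-- neighbours -/
noncomputable def nb (G : SimpleGraph V) (x : V) : Finset V := univ.filter fun a => G.Adj x a

/-- weight of a directed edge -/
noncomputable def wt (G : SimpleGraph V) (x v : V) : ℝ := ∑ w ∈ nb G v, ph G x w

theorem Cr.symm {G : SimpleGraph V} {x v a b : V} (h : Cr G x v a b) : Cr G v x b a :=
  ⟨h.2.2.1, h.2.2.2.1, h.1, h.2.1, h.2.2.2.2.symm⟩

theorem St.symm {G : SimpleGraph V} {x v z : V} (h : St G x v z) : St G v x z :=
  fun a b hab => (h b a hab.symm).symm

theorem US.symm {G : SimpleGraph V} {x v z : V} (h : US G x v z) : US G v x z :=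
  ⟨h.1.symm, fun z' hz' => h.2 z' hz'.symm⟩

theorem Sp.swap {G : SimpleGraph V} {x v z : V} (h : Sp G x v z) : Sp G v x z := by
  obtain ⟨h1, h2, h3, h4, h5, h6⟩ := h
  exact ⟨h1.symm, h3, h2, h4.symm, h6, h5⟩

theorem Sp.rot {G : SimpleGraph V} {x v z : V} (h : Sp G x v z) : Sp G z v x := by
  obtain ⟨h1, h2, h3, h4, h5, h6⟩ := h
  exact ⟨h3.symm, h2.symm, h1.symm, h5.symm, h4.symm, h6.symm⟩

theorem ph_ge (G : SimpleGraph V) (x w : V) : -1 ≤ ph G x w := by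
  unfold ph
  have : (0 : ℝ) ≤ 2 / ((cn G x w).card : ℝ) := by positivity
  linarith

theorem ph_one {G : SimpleGraph V} {x w v : V} (h1 : G.Adj x v) (h2 : G.Adj w v)
    (h : ∀ a, G.Adj x a → G.Adj w a → a = v) : 1 ≤ ph G x w := by
  have : cn G x w = {v} := by
    ext a
    simp only [cn, mem_filter, mem_univ, true_and, mem_singleton]
    constructor
    · rintro ⟨p, q⟩
      exact h a p q
    · rintro rfl
      exact ⟨h1, h2⟩
  unfold ph
  rw [this]
  norm_num

theorem ph_zero {G : SimpleGraph V} {x w v z : V} (h1 : G.Adj x v) (h2 : G.Adj w v)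
    (h : ∀ a, G.Adj x a → G.Adj w a → a = v ∨ a = z) : 0 ≤ ph G x w := by
  have hsub : cn G x w ⊆ {v, z} := by
    intro a
    simp only [cn, mem_filter, mem_univ, true_and, mem_singleton, mem_insert]
    rintro ⟨p, q⟩
    exact h a p q
  have hc : (cn G x w).card ≤ 2 := (card_le_card hsub).trans card_le_two
  have hp : 0 < (cn G x w).card := card_pos.2 ⟨v, by simp [cn, h1, h2]⟩
  unfold ph
  have hp' : (0 : ℝ) < ((cn G x w).card : ℝ) := by exact_mod_cast hp
  have hc' : ((cn G x w).card : ℝ) ≤ 2 := by exact_mod_cast hc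
  have : 1 ≤ 2 / ((cn G x w).card : ℝ) := by
    rw [le_div_iff₀ hp']
    linarith
  linarith

theorem sum_lower (N T : Finset V) (g : V → ℝ) (k t m : ℝ) (hm : 0 ≤ m) (ht : 0 ≤ t)
    (hk : (T.card : ℝ) ≤ k)
    (h1 : ∀ w ∈ N, -m ≤ g w) (h2 : ∀ w ∈ N, w ∉ T → t ≤ g w) :
    t * N.card - (m + t) * k ≤ ∑ w ∈ N, g w := by
  have key : ∑ w ∈ N, (t - (m + t) * (if w ∈ T then 1 else 0)) ≤ ∑ w ∈ N, g w := by
    apply sum_le_sum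
    intro w hw
    split_ifs with h
    · have := h1 w hw
      linarith
    · have := h2 w hw h
      linarith
  rw [sum_sub_distrib, ← mul_sum, sum_const, nsmul_eq_mul, sum_boole] at key
  have hc : ((N.filter fun w => w ∈ T).card : ℝ) ≤ T.card := by
    exact_mod_cast card_le_card (fun w hw => (mem_filter.1 hw).2)
  have : (m + t) * ((N.filter fun w => w ∈ T).card : ℝ) ≤ (m + t) * k :=
    mul_le_mul_of_nonneg_left (hc.trans hk) (by linarith)
  linarith

theorem wt_big {G : SimpleGraph V} {x v : V} (hxv : G.Adj x v) (T : Finset V) (hT : T.card ≤ 4)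
    (hx : x ∈ T) (h : ∀ a b, Cr G x v a b → b ∈ T) : ((nb G v).card : ℝ) - 8 ≤ wt G x v := by
  have := sum_lower (nb G v) T (ph G x) 4 1 1 (by norm_num) (by norm_num) (by exact_mod_cast hT)
    (fun w _ => ph_ge G x w) ?_
  · unfold wt
    linarith
  intro w hw hwT
  simp only [nb, mem_filter, mem_univ, true_and] at hw
  apply ph_one hxv hw.symm
  intro a h1 h2
  by_contra hav
  exact hwT (h a w ⟨h1, hav, hw, fun e => hwT (e ▸ hx), h2.symm⟩)

theorem wt_star {G : SimpleGraph V} {x v z : V} (hxv : G.Adj x v) (h : St G x v z) :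
    -2 ≤ wt G x v := by
  have := sum_lower (nb G v) {x, z} (ph G x) 2 0 1 (by norm_num) (by norm_num)
    (by exact_mod_cast card_le_two) (fun w _ => ph_ge G x w) ?_
  · unfold wt
    linarith
  intro w hw hwT
  simp only [nb, mem_filter, mem_univ, true_and] at hw
  simp only [mem_insert, mem_singleton, not_or] at hwT
  apply ph_zero (z := z) hxv hw.symm
  intro a h1 h2
  by_contra hav
  push Not at hav
  rcases h a w ⟨h1, hav.1, hw, hwT.1, h2.symm⟩ with e | e
  · exact hav.2 e
  · exact hwT.2 e

theorem wt_half {G : SimpleGraph V} {x v z : V} (hxv : G.Adj x v) (h : St G x v z)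
    (hs : (univ.filter fun b => Cr G x v z b).card ≤ 2) :
    ((nb G v).card : ℝ) - 8 ≤ wt G x v := by
  refine wt_big hxv (insert x (insert z (univ.filter fun b => Cr G x v z b))) ?_ (by simp) ?_
  · have h1 := card_insert_le x (insert z (univ.filter fun b => Cr G x v z b))
    have h2 := card_insert_le z (univ.filter fun b => Cr G x v z b)
    omega
  · intro a b hab
    rcases h a b hab with rfl | rfl
    · simp [hab]
    · simp

theorem cr_inter {G : SimpleGraph V} (hG : NoB2 G) {x v : V} (hxv : G.Adj x v) :
    ∀ a b a' b', Cr G x v a b → Cr G x v a' b' → (a = a' ∨ a = b' ∨ b = a' ∨ b = b') := by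
  rintro a b a' b' ⟨h1, h2, h3, h4, h5⟩ ⟨k1, k2, k3, k4, k5⟩
  exact hG x v a b a' b' hxv h1 h3 h5 k1 k3 k5 h2 h4 k2 k4

theorem us_of_three {V : Type*} [Fintype V] {G : SimpleGraph V} (hG : NoB2 G) {x v z : V}
    (hxv : G.Adj x v)
    (w1 w2 w3 : V) (n12 : w1 ≠ w2) (n13 : w1 ≠ w3) (n23 : w2 ≠ w3) (h1 : Cr G x v z w1)
    (h2 : Cr G x v z w2) (h3 : Cr G x v z w3) : US G x v z := by
  have e1 := h1.2.2.2.2.ne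
  have e2 := h2.2.2.2.2.ne
  constructor
  · intro a b hab
    have := cr_inter hG hxv a b _ _ hab h1
    have := cr_inter hG hxv a b _ _ hab h2
    have := cr_inter hG hxv a b _ _ hab h3
    have := hab.2.2.2.2.ne
    grind
  · intro z' hz'
    have := hz' _ _ h1
    have := hz' _ _ h2
    grind

theorem nonspecial {G : SimpleGraph V} (hG : NoB2 G) {x v : V} (hxv : G.Adj x v)
    (hns : ¬ ∃ z, Sp G x v z) (D : ℝ) (hD : ∀ u, D ≤ ((nb G u).card : ℝ)) :
    D - 16 ≤ wt G x v + wt G v x := by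
  have dx := hD x
  have dv := hD v
  rcases inter_family (Cr G x v) (cr_inter hG hxv) with ⟨z, hz⟩ | ⟨T, hT, h⟩
  · have hz' : St G x v z := hz
    have b1 := wt_star hxv hz'
    have b2 := wt_star hxv.symm hz'.symm
    by_cases c1 : (univ.filter fun b => Cr G x v z b).card ≤ 2
    · have := wt_half hxv hz' c1
      linarith
    by_cases c2 : (univ.filter fun b => Cr G v x z b).card ≤ 2
    · have := wt_half hxv.symm hz'.symm c2
      linarith
    exfalso
    apply hns
    push Not at c1 c2
    obtain ⟨p1, hp1, p2, hp2, p3, hp3, p12, p13, p23⟩ := two_lt_card.1 c1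
    obtain ⟨q1, hq1, q2, hq2, q3, hq3, q12, q13, q23⟩ := two_lt_card.1 c2
    simp only [mem_filter, mem_univ, true_and] at hp1 hp2 hp3 hq1 hq2 hq3
    have hxz : G.Adj x z := hp1.1
    have hvz : G.Adj v z := hq1.1
    have conv : ∀ {x v q : V}, G.Adj x v → G.Adj x z → Cr G v x z q → Cr G v z x q := by
      rintro x v q hxv hxz ⟨k1, k2, k3, k4, k5⟩
      exact ⟨hxv.symm, hxz.ne, k5, k4, k3⟩
    refine ⟨z, hxv, hxz, hvz, us_of_three hG hxv p1 p2 p3 p12 p13 p23 hp1 hp2 hp3,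
      us_of_three hG hvz q1 q2 q3 q12 q13 q23 (conv hxv hxz hq1) (conv hxv hxz hq2)
        (conv hxv hxz hq3),
      us_of_three hG hxz p1 p2 p3 p12 p13 p23 (conv hxv.symm hvz hp1) (conv hxv.symm hvz hp2)
        (conv hxv.symm hvz hp3)⟩
  · have b1 := wt_big hxv (insert x T) ((card_insert_le _ _).trans (by omega)) (by simp)
      (fun a b hab => mem_insert_of_mem (h a b hab).2)
    have b2 := wt_big hxv.symm (insert v T) ((card_insert_le _ _).trans (by omega)) (by simp)
      (fun a b hab => mem_insert_of_mem (h b a hab.symm).1)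
    have : (0 : ℝ) ≤ ((nb G x).card : ℝ) := by positivity
    linarith

theorem special {G : SimpleGraph V} (hG : NoB2 G) {x v z : V}
    (hs : Sp G x v z) (D : ℝ) (hD : ∀ u, D ≤ ((nb G u).card : ℝ)) :
    D - 16 ≤ wt G x v + wt G z v := by
  obtain ⟨hxv, hxz, hvz, u1, u2, u3⟩ := hs
  have dv := hD v
  let K : Finset V := univ.filter fun w => G.Adj v w ∧ G.Adj x w ∧ G.Adj z w
  have hK : K.card ≤ 2 := by
    by_contra hcon
    push Not at hcon
    obtain ⟨p1, hp1, p2, hp2, p3, hp3, p12, p13, p23⟩ := two_lt_card.1 hcon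
    simp only [K, mem_filter, mem_univ, true_and] at hp1 hp2 hp3
    have := cr_inter hG hp1.2.1 p2 v p3 z
      ⟨hp2.2.1, p12.symm, hp1.1.symm, hxv.ne.symm, hp2.1.symm⟩
      ⟨hp3.2.1, p13.symm, hp1.2.2.symm, hxz.ne.symm, hp3.2.2.symm⟩
    have := hp2.2.2.ne
    have := hp3.1.ne
    have := hvz.ne
    grind
  have := sum_lower (nb G v) (insert x (insert z K)) (fun w => ph G x w + ph G z w) 4 1 2
    (by norm_num) (by norm_num) ?_ ?_ ?_
  · rw [sum_add_distrib] at this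
    unfold wt
    linarith
  · have h1 := card_insert_le x (insert z K)
    have h2 := card_insert_le z K
    have : (insert x (insert z K)).card ≤ 4 := by omega
    exact_mod_cast this
  · intro w _
    have := ph_ge G x w
    have := ph_ge G z w
    linarith
  · intro w hw hwT
    simp only [nb, mem_filter, mem_univ, true_and] at hw
    simp only [K, mem_insert, mem_filter, mem_univ, true_and, not_or, not_and] at hwT
    obtain ⟨nx, nz, nk⟩ := hwT
    have a1 : ∀ a, G.Adj x a → G.Adj w a → a = v ∨ a = z := by
      intro a h1 h2
      by_contra hav
      push Not at hav
      rcases u1.1 a w ⟨h1, hav.1, hw, nx, h2.symm⟩ with e | e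
      · exact hav.2 e
      · exact nz e
    have a2 : ∀ a, G.Adj z a → G.Adj w a → a = v ∨ a = x := by
      intro a h1 h2
      by_contra hav
      push Not at hav
      rcases u2.1 w a ⟨hw, nz, h1, hav.1, h2⟩ with e | e
      · exact nx e
      · exact hav.2 e
    have z1 := ph_zero hxv hw.symm a1
    have z2 := ph_zero hvz.symm hw.symm a2
    by_cases hwz : G.Adj w z
    · have : 1 ≤ ph G z w := by
        apply ph_one hvz.symm hw.symm
        intro a h1 h2
        rcases a2 a h1 h2 with e | e
        · exact e
        · subst e
          exact absurd hwz.symm (nk hw h2.symm)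
      linarith
    · have : 1 ≤ ph G x w := by
        apply ph_one hxv hw.symm
        intro a h1 h2
        rcases a1 a h1 h2 with e | e
        · exact e
        · subst e
          exact absurd h2 hwz
      linarith

/-- The involution on directed edges. -/
noncomputable def inv (G : SimpleGraph V) (p : V × V) : V × V :=
  if h : ∃ z, Sp G p.1 p.2 z then (h.choose, p.2) else (p.2, p.1)

theorem inv_sp {G : SimpleGraph V} {x v z : V} (h : Sp G x v z) : inv G (x, v) = (z, v) := by
  have he : ∃ z, Sp G x v z := ⟨z, h⟩
  have : he.choose = z := h.2.2.2.1.2 _ he.choose_spec.2.2.2.1.1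
  unfold inv
  rw [dif_pos he]
  simp [this]

theorem inv_nsp {G : SimpleGraph V} {x v : V} (h : ¬ ∃ z, Sp G x v z) :
    inv G (x, v) = (v, x) := by
  unfold inv
  rw [dif_neg h]

theorem inv_adj {G : SimpleGraph V} {x v : V} (h : G.Adj x v) :
    G.Adj (inv G (x, v)).1 (inv G (x, v)).2 ∧ inv G (inv G (x, v)) = (x, v) := by
  by_cases hs : ∃ z, Sp G x v z
  · obtain ⟨z, hz⟩ := hs
    rw [inv_sp hz, inv_sp hz.rot]
    exact ⟨hz.2.2.1.symm, rfl⟩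
  · rw [inv_nsp hs, inv_nsp (fun ⟨z, hz⟩ => hs ⟨z, hz.swap⟩)]
    exact ⟨h.symm, rfl⟩

/-- directed edges -/
noncomputable def dd (G : SimpleGraph V) : Finset (V × V) :=
  univ.filter fun p => G.Adj p.1 p.2

theorem main_lower {G : SimpleGraph V} (hG : NoB2 G) (D : ℝ)
    (hD : ∀ u, D ≤ ((nb G u).card : ℝ)) :
    ((dd G).card : ℝ) * (D - 16) ≤ 2 * ∑ p ∈ dd G, wt G p.1 p.2 := by
  have h1 : ∑ p ∈ dd G, wt G p.1 p.2 = ∑ p ∈ dd G, wt G (inv G p).1 (inv G p).2 := by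
    symm
    apply sum_nbij' (inv G) (inv G)
    · rintro ⟨x, v⟩ hp
      simp only [dd, mem_filter, mem_univ, true_and] at hp ⊢
      exact (inv_adj hp).1
    · rintro ⟨x, v⟩ hp
      simp only [dd, mem_filter, mem_univ, true_and] at hp ⊢
      exact (inv_adj hp).1
    · rintro ⟨x, v⟩ hp
      simp only [dd, mem_filter, mem_univ, true_and] at hp ⊢
      exact (inv_adj hp).2
    · rintro ⟨x, v⟩ hp
      simp only [dd, mem_filter, mem_univ, true_and] at hp ⊢
      exact (inv_adj hp).2
    · intro p _
      rfl
  have h2 : ∑ p ∈ dd G, (D - 16) ≤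
      ∑ p ∈ dd G, (wt G p.1 p.2 + wt G (inv G p).1 (inv G p).2) := by
    apply sum_le_sum
    rintro ⟨x, v⟩ hp
    simp only [dd, mem_filter, mem_univ, true_and] at hp
    by_cases hs : ∃ z, Sp G x v z
    · obtain ⟨z, hz⟩ := hs
      rw [inv_sp hz]
      exact special hG hz D hD
    · rw [inv_nsp hs]
      exact nonspecial hG hp hs D hD
  rw [sum_const, nsmul_eq_mul, sum_add_distrib, ← h1] at h2
  linarith

theorem main_upper (G : SimpleGraph V) :
    ∑ p ∈ dd G, wt G p.1 p.2 ≤ 2 * (Fintype.card V : ℝ) ^ 2 - ∑ v, ((nb G v).card : ℝ) ^ 2 := by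
  have e1 : ∑ p ∈ dd G, wt G p.1 p.2 =
      ∑ x, ∑ w, ((cn G x w).card : ℝ) * ph G x w := by
    have : ∀ x w, ((cn G x w).card : ℝ) * ph G x w =
        ∑ v, if G.Adj x v ∧ G.Adj v w then ph G x w else 0 := by
      intro x w
      rw [← sum_filter, sum_const, nsmul_eq_mul]
      congr 3
      ext a
      simp [cn, G.adj_comm w a]
    simp_rw [this]
    unfold dd wt nb
    rw [sum_filter, Fintype.sum_prod_type]
    apply sum_congr rfl
    intro x _
    rw [sum_comm]
    apply sum_congr rfl
    intro v _
    simp only [sum_filter]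
    split_ifs with h <;> simp [h]
  have e2 : ∑ v, ((nb G v).card : ℝ) ^ 2 = ∑ x, ∑ w, ((cn G x w).card : ℝ) := by
    have h1 : ∀ x w, ((cn G x w).card : ℝ) = ∑ v, if G.Adj x v ∧ G.Adj w v then (1 : ℝ) else 0 := by
      intro x w
      rw [sum_boole]
      rfl
    have h2 : ∀ v, ((nb G v).card : ℝ) = ∑ x, if G.Adj x v then (1 : ℝ) else 0 := by
      intro v
      rw [sum_boole]
      simp [nb, G.adj_comm v]
    simp_rw [h1, h2, pow_two, sum_mul_sum]
    rw [sum_comm]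
    apply sum_congr rfl
    intro x _
    rw [sum_comm]
    apply sum_congr rfl
    intro w _
    apply sum_congr rfl
    intro v _
    by_cases a1 : G.Adj x v <;> by_cases a2 : G.Adj w v <;> simp [a1, a2]
  have e3 : ∑ x, ∑ w, ((cn G x w).card : ℝ) * ph G x w ≤
      ∑ x, ∑ w, (2 - ((cn G x w).card : ℝ)) := by
    apply sum_le_sum
    intro x _
    apply sum_le_sum
    intro w _
    unfold ph
    by_cases h0 : ((cn G x w).card : ℝ) = 0
    · rw [h0]
      norm_num
    · apply le_of_eq
      field_simp
  rw [e1, e2]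
  refine e3.trans (le_of_eq ?_)
  simp only [sum_sub_distrib, sum_const, card_univ, nsmul_eq_mul]
  ring

theorem nb_sum (G : SimpleGraph V) : ∑ v, ((nb G v).card : ℝ) = 2 * (G.edgeSet.ncard : ℝ) := by
  have h := G.sum_degrees_eq_twice_card_edges
  have h2 : G.edgeSet.ncard = #G.edgeFinset := by
    rw [← SimpleGraph.coe_edgeFinset, Set.ncard_coe_finset]
  rw [h2]
  have h3 : ∀ v, (nb G v).card = G.degree v := by
    intro v
    rw [← SimpleGraph.card_neighborFinset_eq_degree]
    congr 1
    ext a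
    simp [nb]
  simp_rw [h3]
  exact_mod_cast h

theorem dd_card (G : SimpleGraph V) : ((dd G).card : ℝ) = ∑ v, ((nb G v).card : ℝ) := by
  have h2 : ∀ v, ((nb G v).card : ℝ) = ∑ x, if G.Adj v x then (1 : ℝ) else 0 := by
    intro v
    rw [sum_boole]
    rfl
  simp_rw [h2]
  rw [← Fintype.sum_prod_type (f := fun p : V × V => if G.Adj p.1 p.2 then (1 : ℝ) else 0),
    sum_boole]
  rfl

theorem main_comb {G : SimpleGraph V} (hG : NoB2 G) (D : ℝ)
    (hD : ∀ u, D ≤ ((nb G u).card : ℝ)) :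
    (G.edgeSet.ncard : ℝ) * (D - 16) * Fintype.card V + 4 * (G.edgeSet.ncard : ℝ) ^ 2 ≤
      2 * (Fintype.card V : ℝ) ^ 3 := by
  have h1 := main_lower hG D hD
  have h2 := main_upper G
  rw [dd_card, nb_sum] at h1
  have h3 := sq_sum_le_card_mul_sum_sq (s := (univ : Finset V)) (f := fun v => ((nb G v).card : ℝ))
  rw [nb_sum, card_univ] at h3
  have h4 : (G.edgeSet.ncard : ℝ) * (D - 16) ≤
      2 * (Fintype.card V : ℝ) ^ 2 - ∑ v, ((nb G v).card : ℝ) ^ 2 := by linarith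
  have h5 := mul_le_mul_of_nonneg_right h4 (Nat.cast_nonneg (α := ℝ) (Fintype.card V))
  nlinarith

end aux

theorem B2_min_degree_upper (c ε : ℝ) (hc : 0 < c) (hε : 0 < ε) :
    ∃ N : ℕ, ∀ n : ℕ, N ≤ n → ∀ G : SimpleGraph (Fin n),
      ¬ ContainsCopy (Bgraph 2) G →
      (∀ v : Fin n, c * (n : ℝ) ^ (1/2 : ℝ) ≤ ((G.neighborSet v).ncard : ℝ)) →
      (G.edgeSet.ncard : ℝ)
        ≤ ((-c + Real.sqrt (c ^ 2 + 32)) / 8 + ε) * (n : ℝ) ^ (3/2 : ℝ) := by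
  classical
  obtain ⟨N, hN⟩ := exists_nat_gt ((4 / ε) ^ 2)
  refine ⟨N + 1, fun n hn G hG hdeg => ?_⟩
  have hD : ∀ u, c * (n : ℝ) ^ (1/2 : ℝ) ≤ ((nb G u).card : ℝ) := by
    intro u
    have : (nb G u).card = (G.neighborSet u).ncard := by
      rw [← Set.ncard_coe_finset]
      congr 1
      ext a
      simp [nb]
    rw [this]
    exact hdeg u
  have main := main_comb (noB2_of G hG) _ hD
  rw [Fintype.card_fin] at main
  set e : ℝ := (G.edgeSet.ncard : ℝ) with he
  have he0 : 0 ≤ e := Nat.cast_nonneg _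
  have hnN : ((N : ℝ) + 1) ≤ n := by exact_mod_cast hn
  have hn0 : (0 : ℝ) < n := by
    have : (0 : ℝ) ≤ N := Nat.cast_nonneg _
    linarith
  set s : ℝ := Real.sqrt n with hs
  have hs0 : 0 < s := Real.sqrt_pos.2 hn0
  have hss : (n : ℝ) = s ^ 2 := (Real.sq_sqrt hn0.le).symm
  have p1 : (n : ℝ) ^ (1/2 : ℝ) = s := (Real.sqrt_eq_rpow _).symm
  have p3 : (n : ℝ) ^ (3/2 : ℝ) = s ^ 3 := by
    rw [hs, Real.sqrt_eq_rpow, ← Real.rpow_natCast, ← Real.rpow_mul hn0.le]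
    norm_num
  rw [p1] at main
  rw [p3]
  have hse : 4 / ε ≤ s := by
    apply Real.le_sqrt_of_sq_le
    linarith
  have hse' : 4 ≤ s * ε := by rwa [div_le_iff₀ hε] at hse
  set r := Real.sqrt (c ^ 2 + 32) with hr
  have hr2 : r ^ 2 = c ^ 2 + 32 := Real.sq_sqrt (by positivity)
  have hrc : c < r := Real.lt_sqrt_of_sq_lt (by linarith)
  obtain ⟨α, hα⟩ : ∃ α, α = (-c + r) / 8 := ⟨_, rfl⟩
  rw [← hα]
  have hα0 : 0 < α := by rw [hα]; linarith
  have hαq : α * (4 * α + c) = 2 := by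
    rw [hα]
    nlinarith
  by_contra hcon
  push Not at hcon
  rw [hss] at main
  obtain ⟨y, hy⟩ : ∃ y, y = e / s ^ 3 := ⟨_, rfl⟩
  have hey : e = y * s ^ 3 := by
    rw [hy]
    field_simp
  have hyα : α + ε < y := by
    rw [hy, lt_div_iff₀ (by positivity)]
    exact hcon
  rw [hey] at main
  have m2 : s ^ 5 * (y * (c * s - 16 + 4 * y * s)) ≤ s ^ 5 * (2 * s) := by
    calc _ = y * s ^ 3 * (c * s - 16) * s ^ 2 + 4 * (y * s ^ 3) ^ 2 := by ring
      _ ≤ 2 * (s ^ 2) ^ 3 := main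
      _ = _ := by ring
  have m3 := le_of_mul_le_mul_left m2 (by positivity)
  have m4 : (4 * α + c) * s ≤ c * s - 16 + 4 * y * s := by nlinarith
  have m5 : y * ((4 * α + c) * s) ≤ 2 * s := (mul_le_mul_of_nonneg_left m4 (by linarith)).trans m3
  have m6 : α * ((4 * α + c) * s) < y * ((4 * α + c) * s) := by
    apply mul_lt_mul_of_pos_right (by linarith)
    positivity
  have m7 : α * ((4 * α + c) * s) = 2 * s := by rw [← mul_assoc, hαq]
  linarith
end

section
/- For all reals c > 0, ε > 0 and δ > 0 there exists N such that for all n ≥ N, every bipartite graph G on n vertices containing no subgraph isomorphic to B_2 and having minimum degree at least c·n^{1/2} satisfies e(G) ≤ ( max{ √(4/27 + 2ε), √(1/4 − 4c²ε) } + δ )·n^{3/2}. -/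
open SimpleGraph

namespace BipB2

open Finset Classical

section core
variable {X Y : Type} [Fintype X] [Fintype Y]

/-- no copy of `B₂` in the bipartite graph given by the relation `R` -/
def Free (R : X → Y → Prop) : Prop :=
  ∀ x₁ x₂ x₃ : X, ∀ y₁ y₂ y₃ : Y, x₁ ≠ x₂ → x₁ ≠ x₃ → x₂ ≠ x₃ → y₁ ≠ y₂ → y₁ ≠ y₃ → y₂ ≠ y₃ →
    R x₁ y₁ → R x₁ y₂ → R x₁ y₃ → R x₂ y₁ → R x₃ y₁ → R x₂ y₂ → R x₃ y₃ → False

lemma Free.flip {R : X → Y → Prop} (h : Free R) : Free (fun y x => R x y) := by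
  intro y₁ y₂ y₃ x₁ x₂ x₃ h1 h2 h3 h4 h5 h6 a b c d e f g
  exact h x₁ x₂ x₃ y₁ y₂ y₃ h4 h5 h6 h1 h2 h3 a d e b c f g

/-- common neighbours -/
noncomputable def cn (R : X → Y → Prop) (y y' : Y) : Finset X := univ.filter fun x => R x y ∧ R x y'

/-- edges -/
noncomputable def edg (R : X → Y → Prop) : Finset (X × Y) := univ.filter fun p => R p.1 p.2

/-- pairs with at least two common neighbours -/
noncomputable def PP (R : X → Y → Prop) : Finset (Y × Y) :=
  univ.filter fun p => p.1 ≠ p.2 ∧ 2 ≤ (cn R p.1 p.2).card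

/-- pairs with exactly two common neighbours -/
noncomputable def P2 (R : X → Y → Prop) : Finset (Y × Y) :=
  univ.filter fun p => p.1 ≠ p.2 ∧ (cn R p.1 p.2).card = 2

lemma third (R : X → Y → Prop) (hR : Free R) :
    ∑ p : Y × Y, (if p.1 ≠ p.2 ∧ 3 ≤ (cn R p.1 p.2).card then (cn R p.1 p.2).card else 0)
      ≤ (edg R).card := by
  rw [← Finset.sum_filter, ← Finset.card_sigma]
  apply Finset.card_le_card_of_injOn (fun q => (q.2, q.1.1))
  · rintro ⟨⟨y, y'⟩, x⟩ h
    simp [cn, edg] at h ⊢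
    exact h.2.1
  · rintro ⟨⟨y, y'⟩, x⟩ h ⟨⟨z, z'⟩, w⟩ h' heq
    simp only [Prod.mk.injEq] at heq
    obtain ⟨rfl, rfl⟩ := heq
    rw [Finset.mem_coe, Finset.mem_sigma] at h h'
    by_cases hne : y' = z'
    · subst hne; rfl
    exfalso
    obtain ⟨hA, hB⟩ := h
    obtain ⟨hA', hB'⟩ := h'
    obtain ⟨h1, h2⟩ := (Finset.mem_filter.1 hA).2
    obtain ⟨h1', h2'⟩ := (Finset.mem_filter.1 hA').2
    obtain ⟨h3, h4⟩ := (Finset.mem_filter.1 hB).2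
    obtain ⟨h3', h4'⟩ := (Finset.mem_filter.1 hB').2
    dsimp only [cn] at h1 h2 h3 h4 h1' h2' h3' h4'
    obtain ⟨u, hu, hux⟩ := Finset.exists_mem_notMem_of_card_lt_card
      (s := {x}) (t := univ.filter fun x => R x y ∧ R x y') (by simp; omega)
    obtain ⟨v, hv, hvx⟩ := Finset.exists_mem_notMem_of_card_lt_card
      (s := {x, u}) (t := univ.filter fun x => R x y ∧ R x z')
      (lt_of_le_of_lt Finset.card_le_two (by omega))
    simp at hu hux hv hvx
    exact hR x u v y y' z' (Ne.symm hux) (fun h => hvx.1 h.symm) (fun h => hvx.2 h.symm) h1 h1' hne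
      h3 h4 h4' hu.1 hv.1 hu.2 hv.2

lemma PP_le (R : X → Y → Prop) (hR : Free R) : (PP R).card ≤ (P2 R).card + (edg R).card := by
  refine le_trans ?_ (Nat.add_le_add_left (third R hR) _)
  unfold PP P2
  rw [Finset.card_filter, Finset.card_filter, ← Finset.sum_add_distrib]
  apply Finset.sum_le_sum
  intro p _
  split_ifs <;> first | omega | (exfalso; grind)

lemma edg_card (R : X → Y → Prop) :
    (edg R).card = ∑ x : X, (univ.filter fun y => R x y).card := by
  unfold edg
  rw [Finset.card_filter, Fintype.sum_prod_type]
  simp only [Finset.card_filter]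

lemma edg_card' (R : X → Y → Prop) :
    (edg R).card = ∑ y : Y, (univ.filter fun x => R x y).card := by
  unfold edg
  rw [Finset.card_filter, Fintype.sum_prod_type_right]
  simp only [Finset.card_filter]

lemma sq_sum (R : X → Y → Prop) :
    ∑ x : X, (univ.filter fun y => R x y).card ^ 2 = ∑ p : Y × Y, (cn R p.1 p.2).card := by
  unfold cn
  simp only [Finset.card_filter]
  rw [Finset.sum_comm]
  refine Finset.sum_congr rfl fun x _ => ?_
  rw [sq, Finset.sum_mul_sum, Fintype.sum_prod_type]
  refine Finset.sum_congr rfl fun y _ => Finset.sum_congr rfl fun y' _ => ?_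
  by_cases h1 : R x y <;> by_cases h2 : R x y' <;> simp [h1, h2]

lemma L1 (R : X → Y → Prop) (hR : Free R) :
    (edg R).card ^ 2 ≤ Fintype.card X *
      (Fintype.card Y ^ 2 + (PP R).card + 2 * (edg R).card) := by
  have h1 : (edg R).card ^ 2 ≤ Fintype.card X *
      ∑ x : X, (univ.filter fun y => R x y).card ^ 2 := by
    rw [edg_card]
    exact sq_sum_le_card_mul_sum_sq
  refine h1.trans (Nat.mul_le_mul_left _ ?_)
  rw [sq_sum]
  have h2 : ∑ p : Y × Y, (if p.1 = p.2 then (cn R p.1 p.2).card else 0) = (edg R).card := by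
    rw [edg_card', Fintype.sum_prod_type]
    simp [cn]
  have h3 := third R hR
  have h4 : ∑ p : Y × Y, 1 = Fintype.card Y ^ 2 := by simp [sq]
  have h5 : ∑ p : Y × Y, (if p.1 ≠ p.2 ∧ 2 ≤ (cn R p.1 p.2).card then 1 else 0) = (PP R).card := by
    rw [PP, Finset.card_filter]
  have : ∑ p : Y × Y, (cn R p.1 p.2).card ≤ ∑ p : Y × Y, (1 +
      (if p.1 ≠ p.2 ∧ 2 ≤ (cn R p.1 p.2).card then 1 else 0)
      + (if p.1 = p.2 then (cn R p.1 p.2).card else 0)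
      + (if p.1 ≠ p.2 ∧ 3 ≤ (cn R p.1 p.2).card then (cn R p.1 p.2).card else 0)) := by
    apply Finset.sum_le_sum
    intro p _
    by_cases h : p.1 = p.2
    · simp only [h, ne_eq, not_true_eq_false, false_and, if_true, if_false]; omega
    · simp only [h, ne_eq, not_false_eq_true, true_and, if_false]
      split_ifs <;> omega
  rw [Finset.sum_add_distrib, Finset.sum_add_distrib, Finset.sum_add_distrib, h2, h4, h5] at this
  omega

/-- edges that lie in a pair with exactly two common neighbours -/
noncomputable def EE (R : X → Y → Prop) : Finset (X × Y) :=
  univ.filter fun p => ∃ y', p.2 ≠ y' ∧ (cn R p.2 y').card = 2 ∧ R p.1 p.2 ∧ R p.1 y'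

/-- pairs with at most one common neighbour -/
noncomputable def MM (R : X → Y → Prop) : Finset (X × X) :=
  univ.filter fun p => p.1 ≠ p.2 ∧ (cn (fun y x => R x y) p.1 p.2).card ≤ 1

lemma MM_le (R : X → Y → Prop) :
    (PP (fun y x => R x y)).card + (MM R).card ≤ Fintype.card X ^ 2 := by
  have : Fintype.card X ^ 2 = (univ : Finset (X × X)).card := by simp [sq]
  rw [this, PP, MM, ← Finset.card_union_of_disjoint]
  · exact Finset.card_le_card (Finset.subset_univ _)
  · rw [Finset.disjoint_left]
    intro p h h'
    simp only [mem_filter] at h h'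
    omega

lemma L3a (R : X → Y → Prop) (hR : Free R) (k : ℕ)
    (hk : ∀ y, k + 2 ≤ (univ.filter fun x => R x y).card) :
    k * (EE R).card ≤ (MM R).card := by
  let T : Finset (X × Y × X) := univ.filter fun t =>
    (t.1, t.2.1) ∈ EE R ∧ t.2.2 ≠ t.1 ∧ R t.2.2 t.2.1 ∧
      (cn (fun y x => R x y) t.1 t.2.2).card ≤ 1
  have h1 : k * (EE R).card ≤ T.card := by
    apply Finset.mul_card_image_le_card_of_maps_to (f := fun t => (t.1, t.2.1))
    · intro t ht
      simp only [T, mem_filter] at ht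
      exact ht.2.1
    · rintro ⟨x, y⟩ hxy
      have hxy' := hxy
      simp only [EE, mem_filter, mem_univ, true_and] at hxy'
      obtain ⟨y', h1, h2, h3, h4⟩ := hxy'
      have hS : k ≤ ((univ.filter fun x => R x y) \ cn R y y').card := by
        have := Finset.le_card_sdiff (cn R y y') (univ.filter fun x => R x y)
        have := hk y
        omega
      refine hS.trans ?_
      apply Finset.card_le_card_of_injOn (fun z => (x, y, z))
      · intro z hz
        simp only [cn, coe_sdiff, Set.mem_sdiff, mem_coe, mem_filter, mem_univ, true_and, not_and]
          at hz
        obtain ⟨hz1, hz2⟩ := hz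
        have hz3 := hz2 hz1
        have hzx : z ≠ x := by rintro rfl; exact hz3 h4
        simp only [T, mem_coe, mem_filter, mem_univ, true_and, and_true]
        refine ⟨hxy, hzx, hz1, ?_⟩
        by_contra hcon
        obtain ⟨w, hw, hwy⟩ := Finset.exists_mem_notMem_of_card_lt_card
          (s := {y}) (t := cn (fun y x => R x y) x z) (by simp; omega)
        obtain ⟨u, hu, hux⟩ := Finset.exists_mem_notMem_of_card_lt_card
          (s := {x}) (t := cn R y y') (by simp; omega)
        simp [cn] at hw hwy hu hux
        refine hR x u z y y' w (Ne.symm hux) (Ne.symm hzx) ?_ h1 (Ne.symm hwy) ?_ h3 h4 hw.1 hu.1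
          hz1 hu.2 hw.2
        · rintro rfl; exact hz3 hu.2
        · rintro rfl; exact hz3 hw.2
      · intro z _ z' _ h
        simpa using h
  have h2 : T.card ≤ (MM R).card := by
    apply Finset.card_le_card_of_injOn (fun t => (t.1, t.2.2))
    · rintro ⟨x, y, z⟩ h
      simp [T, MM] at h ⊢
      exact ⟨fun h' => h.2.1 h'.symm, h.2.2.2⟩
    · rintro ⟨x, y, z⟩ h ⟨x', y', z'⟩ h' heq
      simp only [Prod.mk.injEq] at heq
      obtain ⟨rfl, rfl⟩ := heq
      simp [T, EE] at h h'
      obtain ⟨⟨w, -, -, h1, -⟩, h2, h3, h4⟩ := h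
      obtain ⟨⟨w', -, -, h1', -⟩, h2', h3', -⟩ := h'
      have := Finset.card_le_one.1 h4 y (by simp [cn]; tauto) y' (by simp [cn]; tauto)
      rw [this]
  exact h1.trans h2

lemma L3b (R : X → Y → Prop) (hR : Free R) (k : ℕ)
    (hk : ∀ y, k + 2 ≤ (univ.filter fun x => R x y).card) :
    k * (2 * (P2 R).card) ≤ (EE R).card * Fintype.card X := by
  let U : Finset (X × Y × Y) := univ.filter fun t =>
    t.2.1 ≠ t.2.2 ∧ (cn R t.2.1 t.2.2).card = 2 ∧ R t.1 t.2.1 ∧ R t.1 t.2.2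
  let W : Finset ((X × Y × Y) × X) := univ.filter fun t =>
    t.1 ∈ U ∧ R t.2 t.1.2.2 ∧ ¬ R t.2 t.1.2.1
  have h1 : 2 * (P2 R).card ≤ U.card := by
    apply Finset.mul_card_image_le_card_of_maps_to (f := fun t => t.2)
    · intro t ht
      simp only [U, mem_filter, mem_univ, true_and] at ht
      simp only [P2, mem_filter, mem_univ, true_and]
      exact ⟨ht.1, ht.2.1⟩
    · rintro ⟨y, y'⟩ h
      simp only [P2, mem_filter, mem_univ, true_and] at h
      rw [← h.2]
      apply Finset.card_le_card_of_injOn (fun x => (x, y, y'))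
      · intro x hx
        simp only [cn, mem_coe, mem_filter, mem_univ, true_and] at hx
        simp only [U, mem_coe, mem_filter, mem_univ, true_and, and_true]
        exact ⟨h.1, h.2, hx⟩
      · intro z _ z' _ h
        simpa using h
  have h2 : k * U.card ≤ W.card := by
    apply Finset.mul_card_image_le_card_of_maps_to (f := fun t => t.1)
    · intro t ht
      simp only [W, mem_filter] at ht
      exact ht.2.1
    · rintro ⟨x, y, y'⟩ h
      have h' := h
      simp only [U, mem_filter, mem_univ, true_and] at h'
      have hS : k ≤ ((univ.filter fun x => R x y') \ cn R y y').card := by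
        have := Finset.le_card_sdiff (cn R y y') (univ.filter fun x => R x y')
        have := hk y'
        omega
      refine hS.trans ?_
      apply Finset.card_le_card_of_injOn (fun z => ((x, y, y'), z))
      · intro z hz
        simp only [cn, coe_sdiff, Set.mem_sdiff, mem_coe, mem_filter, mem_univ, true_and, not_and]
          at hz
        simp only [W, mem_coe, mem_filter, mem_univ, true_and, and_true]
        exact ⟨h, hz.1, fun h => hz.2 h hz.1⟩
      · intro z _ z' _ h
        simpa using h
  have h3 : W.card ≤ (EE R ×ˢ (univ : Finset X)).card := by
    apply Finset.card_le_card_of_injOn (fun t => ((t.1.1, t.1.2.1), t.2))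
    · rintro ⟨⟨x, y, y'⟩, z⟩ h
      simp [W, U, EE] at h ⊢
      exact ⟨y', h.1⟩
    · rintro ⟨⟨x, y, y'⟩, z⟩ h ⟨⟨x₁, y₁, y''⟩, z₁⟩ h' heq
      simp only [Prod.mk.injEq] at heq
      obtain ⟨⟨rfl, rfl⟩, rfl⟩ := heq
      simp [W, U] at h h'
      obtain ⟨⟨a1, a2, a3, a4⟩, a5, a6⟩ := h
      obtain ⟨⟨b1, b2, b3, b4⟩, b5, b6⟩ := h'
      by_cases hne : y' = y''
      · rw [hne]
      exfalso
      obtain ⟨u, hu, hux⟩ := Finset.exists_mem_notMem_of_card_lt_card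
        (s := {x}) (t := cn R y y') (by simp; omega)
      simp [cn] at hu hux
      refine hR x u z y' y y'' (Ne.symm hux) ?_ ?_ (Ne.symm a1) hne b1 a4 a3 b4 hu.2 a5 hu.1 b5
      · rintro rfl; exact a6 a3
      · rintro rfl; exact a6 hu.1
  rw [Finset.card_product, Finset.card_univ] at h3
  exact (Nat.mul_le_mul_left k h1).trans (h2.trans h3)

lemma edg_flip (R : X → Y → Prop) : (edg (fun y x => R x y)).card = (edg R).card := by
  rw [edg_card, edg_card']

end core

lemma final_step (m K K' δ E s : ℝ) (hm : 0 ≤ m) (hδ : 0 < δ) (hK : 0 ≤ K)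
    (hs : 0 < s) (hs' : (K' + K / δ) / δ < s)
    (h : E ^ 2 ≤ m ^ 2 * s ^ 6 + K * s ^ 5 + K' * s ^ 2 * E) : E ≤ (m + δ) * s ^ 3 := by
  by_contra hcon
  push Not at hcon
  rw [div_lt_iff₀ hδ] at hs'
  have h1 : (m + δ) * K' + K ≤ (m + δ) * (K' + K / δ) := by
    have : (m + δ) * (K' + K / δ) = (m + δ) * K' + K + m * (K / δ) := by field_simp; ring
    have : 0 ≤ m * (K / δ) := by positivity
    linarith
  have h2 : (m + δ) * (K' + K / δ) < (m + δ) * (s * δ) := by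
    apply mul_lt_mul_of_pos_left hs'; positivity
  have hKδ : 0 ≤ K / δ := by positivity
  have h3 : 0 < (m + δ) * s ^ 3 := by positivity
  have h4 : 0 < (m + δ) * s ^ 3 - K' * s ^ 2 := by
    have : K' < (m + δ) * s := by nlinarith [mul_nonneg hm hs.le]
    nlinarith [mul_lt_mul_of_pos_right this (pow_pos hs 2)]
  have h5 : (m + δ) * s ^ 3 * ((m + δ) * s ^ 3 - K' * s ^ 2) < E * (E - K' * s ^ 2) := by
    apply mul_lt_mul'' hcon (by linarith) h3.le h4.le
  have h6 : (m ^ 2 * s + ((m + δ) * K' + K)) * s ^ 5 < (m ^ 2 * s + (m + δ) * (s * δ)) * s ^ 5 := by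
    apply mul_lt_mul_of_pos_right (by linarith); positivity
  have h7 : 0 ≤ m * δ * s ^ 6 := by positivity
  nlinarith

lemma numeric (c ε δ s a b E p q r m k : ℝ) (hc : 0 < c) (hε : 0 < ε) (hδ : 0 < δ) (hs : 0 < s)
    (ha : 0 ≤ a) (hab : a ≤ b) (hsum : a + b = s ^ 2) (hE : 0 ≤ E) (hq : 0 ≤ q) (hm : 0 ≤ m)
    (h1 : E ^ 2 ≤ a * (b ^ 2 + p + 2 * E)) (h2 : E ^ 2 ≤ b * (a ^ 2 + r + 2 * E))
    (h3 : p ≤ q + E) (h4 : r + m ≤ a ^ 2) (h5 : k * (k * (2 * q)) ≤ a * m)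
    (hk : c * s - 2 ≤ k) (hcs : 2 ≤ c * s)
    (hs' : (2 + 2 * c ^ 2 + 16 * ε * c / δ) / δ < s) :
    E ≤ (max (Real.sqrt (4 / 27 + 2 * ε)) (Real.sqrt (1 / 4 - 4 * c ^ 2 * ε)) + δ) * s ^ 3 := by
  have hb : 0 ≤ b := ha.trans hab
  have hbs : b ≤ s ^ 2 := by linarith
  have has : a ≤ s ^ 2 := by linarith
  apply final_step _ (16 * ε * c) (2 + 2 * c ^ 2) δ E s (le_max_of_le_left (Real.sqrt_nonneg _)) hδ
    (by positivity) hs hs'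
  have hE2 : 0 ≤ c ^ 2 * s ^ 2 * E := by positivity
  have hE3 : 0 ≤ ε * c * s ^ 5 := by positivity
  by_cases hp : p ≤ 2 * ε * s ^ 4
  · have hM : 4 / 27 + 2 * ε ≤
        (max (Real.sqrt (4 / 27 + 2 * ε)) (Real.sqrt (1 / 4 - 4 * c ^ 2 * ε))) ^ 2 := by
      rw [← Real.sqrt_le_left (le_max_of_le_left (Real.sqrt_nonneg _))]
      exact le_max_left _ _
    have hM' := mul_le_mul_of_nonneg_right hM (pow_pos hs 6).le
    have e1 : a * b ^ 2 ≤ 4 / 27 * s ^ 6 := by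
      have : s ^ 6 = (a + b) ^ 3 := by rw [hsum]; ring
      rw [this]
      nlinarith [mul_nonneg ha (sq_nonneg (2 * a - b)), mul_nonneg hb (sq_nonneg (2 * a - b))]
    have e2 : a * p ≤ s ^ 2 * (2 * ε * s ^ 4) := by
      calc a * p ≤ a * (2 * ε * s ^ 4) := mul_le_mul_of_nonneg_left hp ha
        _ ≤ _ := mul_le_mul_of_nonneg_right has (by positivity)
    have e3 : a * E ≤ s ^ 2 * E := mul_le_mul_of_nonneg_right has hE
    nlinarith
  · push Not at hp
    have hM : 1 / 4 - 4 * c ^ 2 * ε ≤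
        (max (Real.sqrt (4 / 27 + 2 * ε)) (Real.sqrt (1 / 4 - 4 * c ^ 2 * ε))) ^ 2 := by
      rw [← Real.sqrt_le_left (le_max_of_le_left (Real.sqrt_nonneg _))]
      exact le_max_right _ _
    have hM' := mul_le_mul_of_nonneg_right hM (pow_pos hs 6).le
    have e1 : 2 * (b * a ^ 2) ≤ 1 / 4 * s ^ 6 := by
      have t1 : 4 * (a * b) ≤ s ^ 2 * s ^ 2 := by rw [← hsum]; nlinarith [sq_nonneg (a - b)]
      have t2 : 2 * a ≤ s ^ 2 := by linarith
      have := mul_le_mul t2 t1 (by positivity) (by positivity)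
      nlinarith
    have e3 : b * E ≤ s ^ 2 * E := mul_le_mul_of_nonneg_right hbs hE
    have e4 : a * m ≤ b * m := mul_le_mul_of_nonneg_right hab hm
    have e5 : (c * s - 2) ^ 2 * (2 * q) ≤ k * (k * (2 * q)) := by
      have : (c * s - 2) ^ 2 ≤ k ^ 2 := pow_le_pow_left₀ (by linarith) hk 2
      have := mul_le_mul_of_nonneg_right this (by positivity : 0 ≤ 2 * q)
      linarith
    have e6 : (c * s - 2) ^ 2 * (2 * (2 * ε * s ^ 4 - E)) ≤ (c * s - 2) ^ 2 * (2 * q) :=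
      mul_le_mul_of_nonneg_left (by linarith) (sq_nonneg _)
    have e7 : (c * s - 2) ^ 2 * E ≤ (c * s) ^ 2 * E :=
      mul_le_mul_of_nonneg_right (pow_le_pow_left₀ (by linarith) (by linarith) 2) hE
    have e8 : ((c * s) ^ 2 - 4 * (c * s)) * (4 * ε * s ^ 4) ≤ (c * s - 2) ^ 2 * (4 * ε * s ^ 4) :=
      mul_le_mul_of_nonneg_right (by nlinarith) (by positivity)
    have e9 : b * r ≤ b * (a ^ 2 - m) := mul_le_mul_of_nonneg_left (by linarith) hb
    linarith

theorem core_thm {X Y : Type} [Fintype X] [Fintype Y] (R : X → Y → Prop) (hR : Free R)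
    (c ε δ s : ℝ) (hc : 0 < c) (hε : 0 < ε) (hδ : 0 < δ) (hs : 0 < s)
    (hab : Fintype.card X ≤ Fintype.card Y)
    (hsum : (Fintype.card X : ℝ) + Fintype.card Y = s ^ 2) (hcs : 2 ≤ c * s)
    (hs' : (2 + 2 * c ^ 2 + 16 * ε * c / δ) / δ < s)
    (hdeg : ∀ y, c * s ≤ ((univ.filter fun x => R x y).card : ℝ)) :
    ((edg R).card : ℝ) ≤
      (max (Real.sqrt (4 / 27 + 2 * ε)) (Real.sqrt (1 / 4 - 4 * c ^ 2 * ε)) + δ) * s ^ 3 := by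
  obtain ⟨k, hk⟩ : ∃ k, ⌈c * s⌉₊ = k + 2 := by
    have : 2 ≤ ⌈c * s⌉₊ := by
      have := hcs.trans (Nat.le_ceil (c * s))
      exact_mod_cast this
    exact ⟨⌈c * s⌉₊ - 2, by omega⟩
  have hk1 : c * s - 2 ≤ k := by
    have := Nat.le_ceil (c * s)
    rw [hk] at this
    push_cast at this
    linarith
  have hk2 : ∀ y, k + 2 ≤ (univ.filter fun x => R x y).card := by
    intro y
    rw [← hk]
    exact Nat.ceil_le.2 (hdeg y)
  have h1 := L1 R hR
  have h2 := L1 _ hR.flip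
  rw [edg_flip] at h2
  have h3 := PP_le R hR
  have h4 := MM_le R
  have h5 : k * (k * (2 * (P2 R).card)) ≤ Fintype.card X * (MM R).card := by
    calc k * (k * (2 * (P2 R).card)) ≤ k * ((EE R).card * Fintype.card X) :=
          Nat.mul_le_mul_left _ (L3b R hR k hk2)
      _ = Fintype.card X * (k * (EE R).card) := by ring
      _ ≤ _ := Nat.mul_le_mul_left _ (L3a R hR k hk2)
  exact numeric c ε δ s (Fintype.card X) (Fintype.card Y) (edg R).card (PP R).card (P2 R).card
    (PP (fun y x => R x y)).card (MM R).card k hc hε hδ hs (by positivity) (by exact_mod_cast hab)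
    hsum (by positivity) (by positivity) (by positivity) (by exact_mod_cast h1)
    (by exact_mod_cast h2) (by exact_mod_cast h3) (by exact_mod_cast h4) (by exact_mod_cast h5)
    hk1 hcs hs'

theorem bridge {n : ℕ} (G : SimpleGraph (Fin n)) (C : G.Coloring (Fin 2)) (i j : Fin 2)
    (hij : i ≠ j) (hfree : ¬ ContainsCopy (Bgraph 2) G)
    (hle : Fintype.card {v // C v = i} ≤ Fintype.card {v // C v = j})
    (c ε δ s : ℝ) (hc : 0 < c) (hε : 0 < ε) (hδ : 0 < δ) (hs : 0 < s)
    (hsn : s ^ 2 = n) (hcs : 2 ≤ c * s)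
    (hs' : (2 + 2 * c ^ 2 + 16 * ε * c / δ) / δ < s)
    (hdeg : ∀ v, c * s ≤ ((G.neighborSet v).ncard : ℝ)) :
    (G.edgeSet.ncard : ℝ) ≤
      (max (Real.sqrt (4 / 27 + 2 * ε)) (Real.sqrt (1 / 4 - 4 * c ^ 2 * ε)) + δ) * s ^ 3 := by
  have hcov : ∀ v, C v ≠ j → C v = i := by
    intro v h
    generalize C v = t at *
    omega
  let R : {v // C v = i} → {v // C v = j} → Prop := fun x y => G.Adj x.1 y.1
  have hF : Free R := by
    intro x₁ x₂ x₃ y₁ y₂ y₃ h1 h2 h3 h4 h5 h6 a1 a2 a3 a4 a5 a6 a7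
    apply hfree
    have hxy : ∀ (x : {v // C v = i}) (y : {v // C v = j}), x.1 ≠ y.1 := by
      intro x y h
      exact hij (x.2.symm.trans (by rw [h, y.2]))
    have hxy' : ∀ (x : {v // C v = i}) (y : {v // C v = j}), y.1 ≠ x.1 :=
      fun x y => (hxy x y).symm
    rw [← Subtype.coe_ne_coe] at h1 h2 h3 h4 h5 h6
    let f : Fin 2 × (Fin 1 ⊕ Fin 2) → Fin n := fun p =>
      match p with
      | (0, Sum.inl _) => x₁.1
      | (1, Sum.inl _) => y₁.1
      | (0, Sum.inr 0) => y₂.1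
      | (0, Sum.inr 1) => y₃.1
      | (1, Sum.inr 0) => x₂.1
      | (1, Sum.inr 1) => x₃.1
    refine ⟨f, ?_, ?_⟩
    · rintro ⟨u, w | w⟩ ⟨u', w' | w'⟩ h <;> fin_cases u <;> fin_cases w <;> fin_cases u' <;>
        fin_cases w' <;> simp [f, hxy, hxy', h1, h2, h3, h4, h5, h6, h1.symm, h2.symm, h3.symm,
          h4.symm, h5.symm, h6.symm] at h ⊢
    · have b1 := a1.symm
      have b2 := a2.symm
      have b3 := a3.symm
      have b4 := a4.symm
      have b5 := a5.symm
      have b6 := a6.symm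
      have b7 := a7.symm
      rintro ⟨u, w | w⟩ ⟨u', w' | w'⟩ h <;> fin_cases u <;> fin_cases w <;> fin_cases u' <;>
        fin_cases w' <;> simp [Bgraph, SimpleGraph.boxProd_adj] at h <;> simp only [f] <;> assumption
  have hE : G.edgeSet.ncard ≤ (edg R).card := by
    have : G.edgeSet ⊆ ((edg R).image fun p => s(p.1.1, p.2.1) : Finset (Sym2 (Fin n))) := by
      intro e
      induction e using Sym2.ind with
      | _ u v =>
        intro h
        rw [SimpleGraph.mem_edgeSet] at h
        have hne := C.valid h
        simp only [edg, coe_image, Set.mem_image, mem_coe, mem_filter, mem_univ, true_and]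
        by_cases hv : C v = j
        · refine ⟨(⟨u, hcov u ?_⟩, ⟨v, hv⟩), h, rfl⟩
          rw [← hv]; exact hne
        · have hvi := hcov v hv
          refine ⟨(⟨v, hvi⟩, ⟨u, ?_⟩), h.symm, Sym2.eq_swap⟩
          by_contra hu
          exact hne ((hcov u hu).trans hvi.symm)
    calc _ ≤ _ := Set.ncard_le_ncard this (Finset.finite_toSet _)
      _ = _ := Set.ncard_coe_finset _
      _ ≤ _ := Finset.card_image_le
  have hD : ∀ y : {v // C v = j}, (G.neighborSet y.1).ncard ≤
      (univ.filter fun x => R x y).card := by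
    intro y
    have : G.neighborSet y.1 ⊆
        ((univ.filter fun x => R x y).image Subtype.val : Finset (Fin n)) := by
      intro u hu
      rw [SimpleGraph.mem_neighborSet] at hu
      simp only [coe_image, Set.mem_image, mem_coe, mem_filter, mem_univ, true_and]
      refine ⟨⟨u, hcov u ?_⟩, hu.symm, rfl⟩
      intro h
      exact C.valid hu (y.2.trans h.symm)
    calc _ ≤ _ := Set.ncard_le_ncard this (Finset.finite_toSet _)
      _ = _ := Set.ncard_coe_finset _
      _ ≤ _ := Finset.card_image_le
  have hsum : Fintype.card {v // C v = i} + Fintype.card {v // C v = j} = n := by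
    have h := Fintype.card_subtype_compl (fun v => C v = j)
    have h' : Fintype.card {v // ¬ C v = j} = Fintype.card {v // C v = i} := by
      apply Fintype.card_congr
      apply Equiv.subtypeEquivRight
      intro v
      exact ⟨hcov v, fun h => by rw [h]; exact hij⟩
    have h'' := Fintype.card_subtype_le (fun v => C v = j)
    rw [Fintype.card_fin] at h h''
    omega
  refine le_trans (by exact_mod_cast hE) (core_thm R hF c ε δ s hc hε hδ hs hle ?_ hcs hs' ?_)
  · rw [hsn]; exact_mod_cast hsum
  · intro y
    exact (hdeg y.1).trans (by exact_mod_cast hD y)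

end BipB2

theorem bip_B2_min_degree_upper (c ε δ : ℝ) (hc : 0 < c) (hε : 0 < ε) (hδ : 0 < δ) :
    ∃ N : ℕ, ∀ n : ℕ, N ≤ n → ∀ G : SimpleGraph (Fin n), G.Colorable 2 →
      ¬ ContainsCopy (Bgraph 2) G →
      (∀ v : Fin n, c * (n : ℝ) ^ (1/2 : ℝ) ≤ ((G.neighborSet v).ncard : ℝ)) →
      (G.edgeSet.ncard : ℝ)
        ≤ (max (Real.sqrt (4 / 27 + 2 * ε)) (Real.sqrt (1 / 4 - 4 * c ^ 2 * ε)) + δ)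
            * (n : ℝ) ^ (3/2 : ℝ) := by
  have htend : Filter.Tendsto (fun n : ℕ => Real.sqrt (n : ℝ)) Filter.atTop Filter.atTop :=
    Real.tendsto_sqrt_atTop.comp tendsto_natCast_atTop_atTop
  obtain ⟨N, hN⟩ := Filter.eventually_atTop.1
    ((htend.eventually_ge_atTop (2 / c)).and
      (htend.eventually_gt_atTop ((2 + 2 * c ^ 2 + 16 * ε * c / δ) / δ)))
  refine ⟨N, fun n hn G hcol hfree hdeg => ?_⟩
  obtain ⟨h1, h2⟩ := hN n hn
  have hs : 0 < Real.sqrt (n : ℝ) := lt_of_lt_of_le (by positivity) h1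
  have hsn : Real.sqrt (n : ℝ) ^ 2 = n := Real.sq_sqrt (Nat.cast_nonneg n)
  have hcs : 2 ≤ c * Real.sqrt (n : ℝ) := by
    rw [div_le_iff₀ hc] at h1
    linarith
  have h3 : (n : ℝ) ^ (3 / 2 : ℝ) = Real.sqrt (n : ℝ) ^ 3 := by
    rw [Real.sqrt_eq_rpow, ← Real.rpow_natCast, ← Real.rpow_mul (Nat.cast_nonneg n)]
    norm_num
  simp only [← Real.sqrt_eq_rpow] at hdeg
  rw [h3]
  obtain ⟨C⟩ := hcol
  rcases le_total (Fintype.card {v // C v = 0}) (Fintype.card {v // C v = 1}) with h | h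
  · exact BipB2.bridge G C 0 1 (by decide) hfree (by convert h) c ε δ _ hc hε hδ hs hsn hcs h2 hdeg
  · exact BipB2.bridge G C 1 0 (by decide) hfree (by convert h) c ε δ _ hc hε hδ hs hsn hcs h2 hdeg
end
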